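/- arXiv:2211.09094 — 2 statements merged into one kernel-verified Lean document; each statement's English description precedes it below -/
import Mathlib

section
/- Let c, ε > 0 be fixed. For every δ > 0 there exists N such that for all integers m, n ≥ N satisfying (ln n)^{3+ε} ≤ c·m, one has |S_{n,m} − m − (π/√2)·√(m·ln n)| ≤ δ·√(m·ln n). In other words, S_{n,m} = m + (π/√2)√(m ln n) + o(√(m ln n)) as m, n → ∞ with (ln n)^{3+ε} ≤ c·m. -/
open Finset

/-- The maximum entry of a tuple `j : Fin n → Fin (m+1)`, as a natural number. -/
def maxEntry {n m : ℕ} (j : Fin n → Fin (m + 1)) : ℕ :=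
  Finset.univ.sup (fun i => (j i : ℕ))

/-- Expected value of `max_i X_i(t)` where `(X_1(t),…,X_n(t))` follows the multivariate
hypergeometric distribution of the counts of each of `n` types (each with multiplicity `m`)
among the bottom `t` cards of a uniformly shuffled deck of `n*m` cards. -/
noncomputable def expMaxHyper (n m t : ℕ) : ℝ :=
  ∑ j ∈ univ.filter (fun j : Fin n → Fin (m + 1) => ∑ i, (j i : ℕ) = t),
    ((∏ i, (Nat.choose m (j i : ℕ) : ℝ)) / (Nat.choose (n * m) t : ℝ)) * (maxEntry j : ℝ)

/-- `S n m`: expected number of correct guesses under the optimal strategy in the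
complete-feedback card guessing game with `n` types each appearing `m` times. -/
noncomputable def S (n m : ℕ) : ℝ :=
  ∑ t ∈ Finset.Icc 1 (n * m), expMaxHyper n m t / t

/-
If `t` is randomised by a uniform `p`, the hypergeometric counts become independent binomials:
`∫ C(N, t) p ^ (t - 1) (1 - p) ^ (N - t) dp = 1 / t` on `[0, 1]` turns `S n m - m` into the integral
over `p` of `(E[max] - m p) / p`, where the maximum is over `n` independent binomial variables with
parameters `m` and `p`. For fixed `p` the excess `E[max] - m p` is asymptotic to
`√(2 p (1 - p) m log n)`: exponential moments bound it from above, and a change of measure to a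
slightly larger success probability shows that one of the `n` samples reaches this height. The
constant `π / √2` is the integral of `√(2 p (1 - p)) / p`. Convergence is dominated by a multiple of
`p ^ (-1 / 2)` for `p > log n / m`, and smaller `p` contribute at most `O(log n ^ 2)`, which is
`o(√(m log n))` precisely when `log n ^ 3 = o(m)`.
-/

open Filter Topology Asymptotics

section FiniteDistributions

variable {κ : Type*} [Fintype κ] {w : κ → ℝ}

lemma exp_sum_mul_le (hw : w ∈ stdSimplex ℝ κ) (f : κ → ℝ) :
    Real.exp (∑ k, w k * f k) ≤ ∑ k, w k * Real.exp (f k) := by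
  simpa using convexOn_exp.map_sum_le (fun k _ => hw.1 k) hw.2 fun k _ => Set.mem_univ (f k)

lemma sum_mul_abs_le_sqrt (hw : w ∈ stdSimplex ℝ κ) (f : κ → ℝ) :
    ∑ k, w k * |f k| ≤ √(∑ k, w k * f k ^ 2) := by
  refine Real.le_sqrt_of_sq_le ?_
  simpa using Real.pow_arith_mean_le_arith_mean_pow univ w (fun k => |f k|)
    (fun k _ => hw.1 k) hw.2 (fun k _ => abs_nonneg _) 2

lemma one_sub_div_sq_le_sum_filter (hw : w ∈ stdSimplex ℝ κ) (f : κ → ℝ) {y : ℝ} (hy : 0 < y) :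
    1 - (∑ k, w k * f k ^ 2) / y ^ 2 ≤ ∑ k with |f k| ≤ y, w k := by
  have htail : ∑ k with ¬ |f k| ≤ y, w k ≤ (∑ k, w k * f k ^ 2) / y ^ 2 := by
    rw [sum_div]
    refine (sum_le_sum fun k hk => ?_).trans (sum_le_univ_sum_of_nonneg fun k =>
      div_nonneg (mul_nonneg (hw.1 k) (sq_nonneg _)) (sq_nonneg y))
    have hk : y ≤ |f k| := (not_le.mp (mem_filter.mp hk).2).le
    rw [le_div_iff₀ (by positivity), ← sq_abs (f k)]
    have := hw.1 k
    gcongr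
  linarith [hw.2, sum_filter_add_sum_filter_not univ (fun k => |f k| ≤ y) w]

end FiniteDistributions

section ExpectedMaximum

lemma apply_ciSup_le_sum {ι : Type*} [Fintype ι] [Nonempty ι] {f : ℝ → ℝ} {y : ι → ℝ}
    (hf : ∀ i, 0 ≤ f (y i)) : f (⨆ i, y i) ≤ ∑ i, f (y i) := by
  obtain ⟨i, hi⟩ := exists_eq_ciSup_of_finite (f := y)
  rw [← hi]
  exact single_le_sum (f := fun i => f (y i)) (fun i _ => hf i) (mem_univ i)

variable {ι κ : Type*} [Fintype ι] [DecidableEq ι] [Fintype κ] {w : κ → ℝ}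

/-- The weight of a tuple of independent samples, each distributed according to `w`. -/
def prodWeight (w : κ → ℝ) (j : ι → κ) : ℝ := ∏ i, w (j i)

lemma sum_prodWeight_mul_prod (w : κ → ℝ) (g : ι → κ → ℝ) :
    ∑ j, prodWeight w j * ∏ i, g i (j i) = ∏ i, ∑ k, w k * g i k := by
  simp only [prodWeight, ← prod_mul_distrib, prod_univ_sum, Fintype.piFinset_univ]

lemma prodWeight_mem_stdSimplex (hw : w ∈ stdSimplex ℝ κ) :
    prodWeight w ∈ stdSimplex ℝ (ι → κ) :=
  ⟨fun _ => prod_nonneg fun _ _ => hw.1 _, by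
    simpa [hw.2] using sum_prodWeight_mul_prod (ι := ι) w fun _ _ => 1⟩

lemma sum_prodWeight_mul_apply (hw : w ∈ stdSimplex ℝ κ) (i : ι) (f : κ → ℝ) :
    ∑ j, prodWeight w j * f (j i) = ∑ k, w k * f k := by
  have h := sum_prodWeight_mul_prod w fun i' k => if i' = i then f k else 1
  have hfactor (i' : ι) : (∑ k, w k * if i' = i then f k else 1) =
      if i' = i then ∑ k, w k * f k else 1 := by
    split_ifs <;> simp [hw.2]
  simp only [hfactor] at h
  simpa using h

lemma sum_prodWeight_filter (w : κ → ℝ) (P : κ → Prop) [DecidablePred P] :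
    ∑ j with ∀ i : ι, P (j i), prodWeight w j = (∑ k with P k, w k) ^ Fintype.card ι := by
  simpa [sum_filter, prod_ite_zero] using
    sum_prodWeight_mul_prod (ι := ι) w fun _ k => if P k then 1 else 0

variable (ι) in
/-- The expected maximum of `x` over independent samples indexed by `ι`, each distributed
according to `w`. -/
noncomputable def expMax (w x : κ → ℝ) : ℝ :=
  ∑ j : ι → κ, prodWeight w j * ⨆ i, x (j i)

lemma sum_mul_le_expMax [Nonempty ι] (hw : w ∈ stdSimplex ℝ κ) (x : κ → ℝ) :
    ∑ k, w k * x k ≤ expMax ι w x := by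
  rw [← sum_prodWeight_mul_apply hw (Classical.arbitrary ι) x]
  exact sum_le_sum fun j _ => mul_le_mul_of_nonneg_left
    (le_ciSup (Set.finite_range fun i => x (j i)).bddAbove _) ((prodWeight_mem_stdSimplex hw).1 j)

lemma sum_prodWeight_mul_sum (hw : w ∈ stdSimplex ℝ κ) (f : κ → ℝ) :
    ∑ j : ι → κ, prodWeight w j * ∑ i, f (j i) = Fintype.card ι * ∑ k, w k * f k := by
  simp only [mul_sum univ fun _ => f _]
  rw [sum_comm]
  simp [sum_prodWeight_mul_apply hw]

lemma expMax_le_card_mul [Nonempty ι] (hw : w ∈ stdSimplex ℝ κ) {x : κ → ℝ} (hx : ∀ k, 0 ≤ x k) :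
    expMax ι w x ≤ Fintype.card ι * ∑ k, w k * x k := by
  rw [← sum_prodWeight_mul_sum hw]
  exact sum_le_sum fun j _ => mul_le_mul_of_nonneg_left
    (apply_ciSup_le_sum (f := id) fun i => hx (j i)) ((prodWeight_mem_stdSimplex hw).1 j)

lemma exp_mul_expMax_le [Nonempty ι] (hw : w ∈ stdSimplex ℝ κ) (x : κ → ℝ) (l : ℝ) :
    Real.exp (l * expMax ι w x) ≤ Fintype.card ι * ∑ k, w k * Real.exp (l * x k) := by
  rw [← sum_prodWeight_mul_sum hw, expMax, mul_sum]
  simp only [mul_left_comm l]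
  refine (exp_sum_mul_le (prodWeight_mem_stdSimplex hw) _).trans (sum_le_sum fun j _ =>
    mul_le_mul_of_nonneg_left ?_ ((prodWeight_mem_stdSimplex hw).1 j))
  exact apply_ciSup_le_sum (f := fun t => Real.exp (l * t)) fun i => (Real.exp_pos _).le

/-- On the event that some sample is at least `μ + y` the maximum is bounded below by that sample,
and elsewhere by any fixed one. -/
lemma mul_one_sub_pow_sub_le_expMax [Nonempty ι] (hw : w ∈ stdSimplex ℝ κ) (x : κ → ℝ)
    (μ y : ℝ) :
    y * (1 - (∑ k with x k < μ + y, w k) ^ Fintype.card ι) - ∑ k, w k * |x k - μ| ≤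
      expMax ι w x - μ := by
  have hW := prodWeight_mem_stdSimplex (ι := ι) hw
  set i₀ := Classical.arbitrary ι
  have hpointwise (j : ι → κ) :
      y * (1 - if ∀ i, x (j i) < μ + y then 1 else 0) - |x (j i₀) - μ| ≤ (⨆ i, x (j i)) - μ := by
    have hle (i : ι) : x (j i) ≤ ⨆ i, x (j i) :=
      le_ciSup (Set.finite_range fun i => x (j i)).bddAbove i
    split_ifs with h
    · linarith [hle i₀, neg_abs_le (x (j i₀) - μ)]
    · push Not at h
      obtain ⟨i, hi⟩ := h
      linarith [hle i, abs_nonneg (x (j i₀) - μ)]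
  have hsum := sum_le_sum fun (j : ι → κ) (_ : j ∈ univ) =>
    mul_le_mul_of_nonneg_left (hpointwise j) (hW.1 j)
  have hevent : ∑ j : ι → κ, prodWeight w j * (y * (1 - if ∀ i, x (j i) < μ + y then 1 else 0)) =
      y * (1 - (∑ k with x k < μ + y, w k) ^ Fintype.card ι) := by
    rw [← sum_prodWeight_filter, sum_filter]
    conv_rhs => rw [← hW.2, ← sum_sub_distrib, mul_sum]
    exact sum_congr rfl fun j _ => by split_ifs <;> ring
  simp only [mul_sub (prodWeight w _), sum_sub_distrib, ← sum_mul, hW.2, one_mul, hevent] at hsum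
  rwa [sum_prodWeight_mul_apply hw i₀ fun k => |x k - μ|] at hsum

end ExpectedMaximum

section Binomial

variable {m : ℕ} {p : ℝ}

/-- The probability that a binomial variable with parameters `m` and `p` equals `k`. -/
noncomputable def binomWeight (m : ℕ) (p : ℝ) (k : ℕ) : ℝ :=
  m.choose k * p ^ k * (1 - p) ^ (m - k)

lemma binomWeight_eq_eval_bernsteinPolynomial (m : ℕ) (p : ℝ) (k : ℕ) :
    binomWeight m p k = (bernsteinPolynomial ℝ m k).eval p := by
  simp [binomWeight, bernsteinPolynomial]

lemma binomWeight_nonneg (hp : p ∈ Set.Icc 0 1) (k : ℕ) : 0 ≤ binomWeight m p k :=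
  mul_nonneg (mul_nonneg (Nat.cast_nonneg _) (pow_nonneg hp.1 _))
    (pow_nonneg (sub_nonneg.mpr hp.2) _)

lemma binomWeight_mem_stdSimplex (hp : p ∈ Set.Icc 0 1) :
    (fun k : Fin (m + 1) => binomWeight m p k) ∈ stdSimplex ℝ (Fin (m + 1)) := by
  refine ⟨fun k => binomWeight_nonneg hp k, ?_⟩
  rw [Fin.sum_univ_eq_sum_range (binomWeight m p)]
  simpa [Polynomial.eval_finsetSum, binomWeight_eq_eval_bernsteinPolynomial] using
    congrArg (Polynomial.eval p) (bernsteinPolynomial.sum ℝ m)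

lemma sum_binomWeight_mul_id (m : ℕ) (p : ℝ) :
    ∑ k : Fin (m + 1), binomWeight m p k * (k : ℕ) = m * p := by
  rw [Fin.sum_univ_eq_sum_range fun k => binomWeight m p k * k]
  simpa [Polynomial.eval_finsetSum, binomWeight_eq_eval_bernsteinPolynomial, mul_comm] using
    congrArg (Polynomial.eval p) (bernsteinPolynomial.sum_smul ℝ m)

lemma sum_binomWeight_mul_sub_sq (m : ℕ) (p : ℝ) :
    ∑ k : Fin (m + 1), binomWeight m p k * ((k : ℕ) - m * p) ^ 2 = m * p * (1 - p) := by
  rw [Fin.sum_univ_eq_sum_range fun k => binomWeight m p k * ((k : ℝ) - m * p) ^ 2]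
  have h := congrArg (Polynomial.eval p) (bernsteinPolynomial.variance ℝ m)
  simp only [Polynomial.eval_finsetSum, nsmul_eq_mul, Polynomial.eval_mul, Polynomial.eval_pow,
    Polynomial.eval_sub, Polynomial.eval_natCast, Polynomial.eval_X, Polynomial.eval_one,
    ← binomWeight_eq_eval_bernsteinPolynomial] at h
  rw [← h]
  exact sum_congr rfl fun k _ => by ring

lemma sum_binomWeight_mul_exp (m : ℕ) (p l : ℝ) :
    ∑ k : Fin (m + 1), binomWeight m p k * Real.exp (l * (k : ℕ)) =
      (p * Real.exp l + (1 - p)) ^ m := by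
  rw [Fin.sum_univ_eq_sum_range fun k => binomWeight m p k * Real.exp (l * k), add_pow]
  refine sum_congr rfl fun k _ => ?_
  rw [binomWeight, mul_comm l, Real.exp_nat_mul, mul_pow]
  ring

/-- The expected maximum of `n` independent binomial variables with parameters `m` and `p`. -/
noncomputable def expMaxBinom (n m : ℕ) (p : ℝ) : ℝ :=
  expMax (Fin n) (fun k : Fin (m + 1) => binomWeight m p k) fun k => ((k : ℕ) : ℝ)

lemma mul_le_expMaxBinom {n : ℕ} (hn : 0 < n) (hp : p ∈ Set.Icc 0 1) :
    m * p ≤ expMaxBinom n m p := by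
  have := Fin.pos_iff_nonempty.mp hn
  rw [← sum_binomWeight_mul_id]
  exact sum_mul_le_expMax (binomWeight_mem_stdSimplex hp) _

lemma expMaxBinom_le_mul {n : ℕ} (hn : 0 < n) (hp : p ∈ Set.Icc 0 1) :
    expMaxBinom n m p ≤ n * (m * p) := by
  have := Fin.pos_iff_nonempty.mp hn
  simpa [expMaxBinom, sum_binomWeight_mul_id] using
    expMax_le_card_mul (ι := Fin n) (binomWeight_mem_stdSimplex hp)
      (x := fun k : Fin (m + 1) => ((k : ℕ) : ℝ)) fun k => Nat.cast_nonneg _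

end Binomial

section IntegralRepresentation

variable {n m : ℕ}

lemma cast_maxEntry (j : Fin n → Fin (m + 1)) : (maxEntry j : ℝ) = ⨆ i, ((j i : ℕ) : ℝ) := by
  rcases isEmpty_or_nonempty (Fin n) with _ | _
  · simp [maxEntry]
  · refine le_antisymm ?_ (ciSup_le fun i => Nat.cast_le.mpr
      (le_sup (f := fun i => (j i : ℕ)) (mem_univ i)))
    obtain ⟨i, -, hi⟩ := exists_mem_eq_sup univ univ_nonempty fun i => (j i : ℕ)
    rw [maxEntry, hi]
    exact le_ciSup (f := fun i => ((j i : ℕ) : ℝ)) (Set.finite_range _).bddAbove i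

lemma sum_entries_le (j : Fin n → Fin (m + 1)) : ∑ i, (j i : ℕ) ≤ n * m := by
  simpa using sum_le_card_nsmul univ (fun i => (j i : ℕ)) m fun i _ => (j i).is_le

/-- Conditionally on their sum, independent binomial variables are hypergeometric. -/
lemma prodWeight_binomWeight (p : ℝ) (j : Fin n → Fin (m + 1)) :
    prodWeight (fun k : Fin (m + 1) => binomWeight m p k) j =
      binomWeight (n * m) p (∑ i, (j i : ℕ)) *
        ((∏ i, (m.choose (j i) : ℝ)) / (n * m).choose (∑ i, (j i : ℕ))) := by
  have hfailures : ∑ i, (m - (j i : ℕ)) = n * m - ∑ i, (j i : ℕ) := by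
    rw [sum_tsub_distrib _ fun i _ => (j i).is_le]
    simp
  have hchoose : ((n * m).choose (∑ i, (j i : ℕ)) : ℝ) ≠ 0 :=
    Nat.cast_ne_zero.mpr (Nat.choose_pos (sum_entries_le j)).ne'
  simp only [prodWeight, binomWeight, prod_mul_distrib, prod_pow_eq_pow_sum, hfailures]
  field_simp

lemma expMaxBinom_eq_sum (n m : ℕ) (p : ℝ) :
    expMaxBinom n m p = ∑ t ∈ Icc 1 (n * m), binomWeight (n * m) p t * expMaxHyper n m t := by
  have hzero : expMaxHyper n m 0 = 0 := by
    refine sum_eq_zero fun j hj => ?_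
    have hj : j = 0 := by simpa [funext_iff] using hj
    simp [hj, cast_maxEntry]
  have hIcc : ∑ t ∈ Icc 1 (n * m), binomWeight (n * m) p t * expMaxHyper n m t =
      ∑ t ∈ range (n * m + 1), binomWeight (n * m) p t * expMaxHyper n m t := by
    rw [sum_range_eq_add_Ico _ (Nat.succ_pos _), hzero, mul_zero, zero_add]
    rfl
  rw [hIcc, expMaxBinom, expMax, ← sum_fiberwise_of_maps_to
    (g := fun j : Fin n → Fin (m + 1) => ∑ i, (j i : ℕ))
    fun j _ => mem_range_succ_iff.mpr (sum_entries_le j)]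
  refine sum_congr rfl fun t _ => ?_
  rw [expMaxHyper, mul_sum]
  refine sum_congr rfl fun j hj => ?_
  rw [prodWeight_binomWeight, (mem_filter.mp hj).2, cast_maxEntry, mul_assoc]

lemma integral_rpow_mul_one_sub_rpow {a b : ℝ} (ha : 0 < a) (hb : 0 < b) :
    ∫ x in (0 : ℝ)..1, x ^ (a - 1) * (1 - x) ^ (b - 1) = ProbabilityTheory.beta a b := by
  rw [ProbabilityTheory.beta_eq_betaIntegralReal a b ha hb, Complex.betaIntegral]
  have hcast : ∀ x ∈ Set.uIcc (0 : ℝ) 1, (x : ℂ) ^ ((a : ℂ) - 1) * (1 - (x : ℂ)) ^ ((b : ℂ) - 1) =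
      ((x ^ (a - 1) * (1 - x) ^ (b - 1) : ℝ) : ℂ) := by
    intro x hx
    rw [Set.uIcc_of_le zero_le_one] at hx
    push_cast [Complex.ofReal_cpow hx.1, Complex.ofReal_cpow (sub_nonneg.mpr hx.2)]
    rfl
  rw [intervalIntegral.integral_congr hcast, intervalIntegral.integral_ofReal, Complex.ofReal_re]

lemma integral_pow_mul_one_sub_pow (s r : ℕ) :
    ∫ x in (0 : ℝ)..1, x ^ s * (1 - x) ^ r = s.factorial * r.factorial / (s + r + 1).factorial := by
  have h := integral_rpow_mul_one_sub_rpow (a := s + 1) (b := r + 1) (by positivity) (by positivity)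
  have hadd : (s + 1 : ℝ) + (r + 1) = ((s + r + 1 : ℕ) : ℝ) + 1 := by push_cast; ring
  simpa only [add_sub_cancel_right, Real.rpow_natCast, ProbabilityTheory.beta, hadd,
    Real.Gamma_nat_eq_factorial] using h

lemma binomWeight_succ_div (N s : ℕ) {p : ℝ} (hp : p ≠ 0) :
    binomWeight N p (s + 1) / p = N.choose (s + 1) * (p ^ s * (1 - p) ^ (N - (s + 1))) := by
  rw [binomWeight, pow_succ]
  field_simp

lemma integral_binomWeight_div {N t : ℕ} (ht : t ∈ Icc 1 N) :
    ∫ p in (0 : ℝ)..1, binomWeight N p t / p = 1 / t := by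
  obtain ⟨ht, htN⟩ := mem_Icc.mp ht
  obtain ⟨s, rfl⟩ := Nat.exists_eq_add_of_le' ht
  obtain ⟨r, rfl⟩ := Nat.exists_eq_add_of_le htN
  have hcongr : ∀ p ∈ Set.uIoo (0 : ℝ) 1, binomWeight (s + 1 + r) p (s + 1) / p =
      (s + 1 + r).choose (s + 1) * (p ^ s * (1 - p) ^ r) := fun p hp => by
    rw [Set.uIoo_of_le zero_le_one] at hp
    rw [binomWeight_succ_div _ _ hp.1.ne', Nat.add_sub_cancel_left]
  rw [intervalIntegral.integral_congr_uIoo hcongr, intervalIntegral.integral_const_mul,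
    integral_pow_mul_one_sub_pow, Nat.choose_symm_add, Nat.add_choose, Nat.cast_div
      (Nat.factorial_mul_factorial_dvd_factorial_add _ _) (by positivity), add_right_comm s r 1,
      Nat.factorial_succ s]
  push_cast
  field_simp

lemma intervalIntegrable_binomWeight_div {N t : ℕ} (ht : t ∈ Icc 1 N) :
    IntervalIntegrable (fun p => binomWeight N p t / p) MeasureTheory.volume 0 1 := by
  by_contra h
  have hint := integral_binomWeight_div ht
  rw [intervalIntegral.integral_undef h] at hint
  have := (mem_Icc.mp ht).1
  exact absurd hint.symm (by positivity)

/-- The excess of the expected maximum of `n` independent binomial variables over their mean,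
relative to their success probability `p`; its integral over `p` is `S n m - m`. -/
noncomputable def excessRatio (n m : ℕ) (p : ℝ) : ℝ := (expMaxBinom n m p - m * p) / p

lemma excessRatio_eqOn (n m : ℕ) : Set.EqOn (excessRatio n m)
    (fun p => ∑ t ∈ Icc 1 (n * m), binomWeight (n * m) p t / p * expMaxHyper n m t - m)
    (Set.uIoo 0 1) := by
  intro p hp
  rw [Set.uIoo_of_le zero_le_one] at hp
  simp only [excessRatio, sub_div, mul_div_cancel_right₀ _ hp.1.ne', expMaxBinom_eq_sum, sum_div,
    div_mul_eq_mul_div]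

lemma intervalIntegrable_sum_binomWeight_div (n m : ℕ) : IntervalIntegrable
    (fun p => ∑ t ∈ Icc 1 (n * m), binomWeight (n * m) p t / p * expMaxHyper n m t)
    MeasureTheory.volume 0 1 := by
  simpa only [sum_fn] using IntervalIntegrable.sum _ fun t ht =>
    (intervalIntegrable_binomWeight_div ht).mul_const (expMaxHyper n m t)

lemma intervalIntegrable_excessRatio (n m : ℕ) :
    IntervalIntegrable (excessRatio n m) MeasureTheory.volume 0 1 :=
  ((intervalIntegrable_sum_binomWeight_div n m).sub (by simp)).congr_uIoo
    (excessRatio_eqOn n m).symm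

lemma integral_excessRatio (n m : ℕ) : ∫ p in (0 : ℝ)..1, excessRatio n m p = S n m - m := by
  rw [intervalIntegral.integral_congr_uIoo (excessRatio_eqOn n m),
    intervalIntegral.integral_sub (intervalIntegrable_sum_binomWeight_div n m) (by simp),
    intervalIntegral.integral_finsetSum
      fun t ht => (intervalIntegrable_binomWeight_div ht).mul_const _, S]
  simp only [intervalIntegral.integral_mul_const, intervalIntegral.integral_const, sub_zero,
    one_smul]
  congr 1
  exact sum_congr rfl fun t ht => by rw [integral_binomWeight_div ht, one_div_mul_eq_div]

end IntegralRepresentation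

section UpperBound

variable {n m : ℕ} {p l : ℝ}

lemma exp_mul_le_one_add_add_sq_mul {y : ℝ} (hl : l ∈ Set.Icc 0 1) (hy : |y| ≤ 1) :
    Real.exp (l * y) ≤ 1 + l * y + y ^ 2 * (l ^ 2 / 2 + l ^ 3) := by
  have hl' : |l| ≤ 1 := (abs_of_nonneg hl.1).trans_le hl.2
  have htaylor := (abs_le.mp (Real.exp_bound (x := l * y)
    (abs_mul l y ▸ mul_le_one₀ hl' (abs_nonneg y) hy) (n := 3) (by norm_num))).2
  have hcube : (|l| * |y|) ^ 3 ≤ l ^ 3 * y ^ 2 := by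
    rw [abs_of_nonneg hl.1, mul_pow, pow_succ |y|, sq_abs]
    exact mul_le_mul_of_nonneg_left (mul_le_of_le_one_right (sq_nonneg y) hy) (pow_nonneg hl.1 3)
  norm_num [sum_range_succ, Nat.factorial] at htaylor
  linarith [mul_nonneg (pow_nonneg hl.1 3) (sq_nonneg y)]

lemma mul_exp_add_le_exp (hp : p ∈ Set.Icc 0 1) (hl : l ∈ Set.Icc 0 1) :
    p * Real.exp l + (1 - p) ≤ Real.exp (p * l + p * (1 - p) * (l ^ 2 / 2 + l ^ 3)) := by
  obtain ⟨hp0, hp1⟩ := hp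
  have : 0 ≤ 1 - p := sub_nonneg.mpr hp1
  have hsuccess := exp_mul_le_one_add_add_sq_mul hl (y := 1 - p) (by grind)
  have hfailure := exp_mul_le_one_add_add_sq_mul hl (y := -p) (by grind)
  calc p * Real.exp l + (1 - p)
      = Real.exp (p * l) * (p * Real.exp (l * (1 - p)) + (1 - p) * Real.exp (l * -p)) := by
        rw [mul_add, mul_left_comm, mul_left_comm _ (1 - p), ← Real.exp_add, ← Real.exp_add,
          show p * l + l * (1 - p) = l by ring, show p * l + l * -p = 0 by ring, Real.exp_zero,
          mul_one]
    _ ≤ Real.exp (p * l) * (p * (1 - p) * (l ^ 2 / 2 + l ^ 3) + 1) := by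
        refine mul_le_mul_of_nonneg_left ?_ (Real.exp_pos _).le
        linear_combination p * hsuccess + (1 - p) * hfailure
    _ ≤ Real.exp (p * l + p * (1 - p) * (l ^ 2 / 2 + l ^ 3)) := by
        rw [Real.exp_add]
        gcongr
        exact Real.add_one_le_exp _

lemma expMaxBinom_sub_le (hn : 0 < n) (hp : p ∈ Set.Icc 0 1) (hl0 : 0 < l) (hl1 : l ≤ 1) :
    expMaxBinom n m p - m * p ≤ Real.log n / l + m * (p * (1 - p)) * (l / 2 + l ^ 2) := by
  have := Fin.pos_iff_nonempty.mp hn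
  have hexp : Real.exp (l * expMaxBinom n m p) ≤
      Real.exp (Real.log n + m * (p * l + p * (1 - p) * (l ^ 2 / 2 + l ^ 3))) :=
    calc Real.exp (l * expMaxBinom n m p)
        ≤ n * (p * Real.exp l + (1 - p)) ^ m := by
          simpa [expMaxBinom, sum_binomWeight_mul_exp] using exp_mul_expMax_le (ι := Fin n)
            (binomWeight_mem_stdSimplex hp) (fun k : Fin (m + 1) => ((k : ℕ) : ℝ)) l
      _ ≤ _ := by
          rw [Real.exp_add, Real.exp_log (Nat.cast_pos.mpr hn), Real.exp_nat_mul]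
          have hmgf := mul_exp_add_le_exp hp ⟨hl0.le, hl1⟩
          have := hp.1
          have := sub_nonneg.mpr hp.2
          gcongr
  rw [Real.exp_le_exp, ← le_div_iff₀' hl0] at hexp
  refine (sub_le_sub_right hexp _).trans_eq ?_
  field_simp
  ring

lemma expMaxBinom_sub_le_sqrt (hn : 1 < n) (hp : p ∈ Set.Icc 0 1) (hmp : Real.log n ≤ m * p) :
    expMaxBinom n m p - m * p ≤ 3 * √(Real.log n * (m * p)) := by
  have hlog : 0 < Real.log n := Real.log_pos (Nat.one_lt_cast.mpr hn)
  have hmp0 : 0 < m * p := hlog.trans_le hmp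
  set l := √(Real.log n / (m * p))
  have hl0 : 0 < l := Real.sqrt_pos.mpr (by positivity)
  have hl1 : l ≤ 1 := Real.sqrt_le_one.mpr ((div_le_one hmp0).mpr hmp)
  have hsq : l ^ 2 * (m * p) = Real.log n := by
    rw [Real.sq_sqrt (by positivity), div_mul_cancel₀ _ hmp0.ne']
  have hlogl : Real.log n / l = m * p * l := by
    rw [← hsq]
    field_simp
  have hsqrt : √(Real.log n * (m * p)) = m * p * l := by
    rw [← hsq, show l ^ 2 * (m * p) * (m * p) = (m * p * l) ^ 2 by ring,
      Real.sqrt_sq (by positivity)]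
  calc expMaxBinom n m p - m * p
      ≤ Real.log n / l + m * (p * (1 - p)) * (l / 2 + l ^ 2) :=
        expMaxBinom_sub_le (by lia) hp hl0 hl1
    _ ≤ m * p * l + m * (p * 1) * (l / 2 + l * 1) := by
        have hq : 1 - p ≤ 1 := sub_le_self 1 hp.1
        have := hp.1
        rw [hlogl, sq l]
        gcongr
    _ ≤ 3 * √(Real.log n * (m * p)) := by
        rw [hsqrt]
        linarith [mul_pos hmp0 hl0]

lemma expMaxBinom_sub_le_log (hn : 0 < n) (hp : p ∈ Set.Icc 0 1) (hmp : m * p ≤ Real.log n) :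
    expMaxBinom n m p - m * p ≤ 3 * Real.log n := by
  have h := expMaxBinom_sub_le (m := m) hn hp one_pos le_rfl
  have : 0 ≤ m * p * p := mul_nonneg (mul_nonneg m.cast_nonneg hp.1) hp.1
  linarith [mul_nonneg m.cast_nonneg hp.1]

lemma excessRatio_nonneg (hn : 0 < n) (hp : p ∈ Set.Icc 0 1) : 0 ≤ excessRatio n m p :=
  div_nonneg (sub_nonneg.mpr (mul_le_expMaxBinom hn hp)) hp.1

lemma excessRatio_le_mul (hn : 0 < n) (hp : p ∈ Set.Icc 0 1) : excessRatio n m p ≤ n * m := by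
  have h := expMaxBinom_le_mul (m := m) hn hp
  exact div_le_of_le_mul₀ hp.1 (by positivity) (by linarith [mul_nonneg m.cast_nonneg hp.1])

lemma excessRatio_le_log_div (hn : 0 < n) (hp : p ∈ Set.Icc 0 1) (hmp : m * p ≤ Real.log n) :
    excessRatio n m p ≤ 3 * Real.log n / p :=
  div_le_div_of_nonneg_right (expMaxBinom_sub_le_log hn hp hmp) hp.1

lemma excessRatio_le_sqrt_mul (hn : 1 < n) (hp : p ∈ Set.Icc 0 1) (hmp : Real.log n ≤ m * p) :
    excessRatio n m p ≤ √(m * Real.log n) * (3 * p ^ (-(1 / 2) : ℝ)) := by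
  have h := div_le_div_of_nonneg_right (expMaxBinom_sub_le_sqrt hn hp hmp) hp.1
  rwa [mul_left_comm, ← mul_assoc, Real.sqrt_mul' _ hp.1, ← mul_assoc, mul_div_assoc,
    Real.sqrt_div_self, mul_comm 3, mul_assoc, Real.sqrt_eq_rpow p, ← Real.rpow_neg hp.1] at h

end UpperBound

section LowerBound

variable {m : ℕ} {p r : ℝ}

/-- The log-likelihood ratio, per trial, of success probability `r` against `p` when a fraction `v`
of the trials succeeds. At `v = r` it is the Kullback–Leibler divergence. -/
noncomputable def bernoulliLogLR (p r v : ℝ) : ℝ :=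
  v * Real.log (r / p) + (1 - v) * Real.log ((1 - r) / (1 - p))

lemma binomWeight_eq_exp_mul (hp : p ∈ Set.Ioo 0 1) (hr : r ∈ Set.Ioo 0 1) {k : ℕ} (hk : k ≤ m) :
    binomWeight m r k =
      Real.exp (k * Real.log (r / p) + (m - k) * Real.log ((1 - r) / (1 - p))) *
        binomWeight m p k := by
  have hp1 : 0 < 1 - p := sub_pos.mpr hp.2
  have hr1 : 0 < 1 - r := sub_pos.mpr hr.2
  rw [Real.exp_add, ← Nat.cast_sub hk, Real.exp_nat_mul, Real.exp_nat_mul,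
    Real.exp_log (div_pos hr.1 hp.1), Real.exp_log (div_pos hr1 hp1), binomWeight, binomWeight,
    div_pow, div_pow]
  have := hp.1
  field_simp

lemma exp_neg_mul_binomWeight_le (hp : 0 < p) (hpr : p ≤ r) (hr : r < 1) {v : ℝ} {k : ℕ}
    (hkm : k ≤ m) (hkv : k ≤ m * v) :
    Real.exp (-(m * bernoulliLogLR p r v)) * binomWeight m r k ≤ binomWeight m p k := by
  have hp1 : 0 < 1 - p := by linarith
  have hsuccess : 0 ≤ Real.log (r / p) := Real.log_nonneg ((one_le_div hp).mpr hpr)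
  have hfailure : Real.log ((1 - r) / (1 - p)) ≤ 0 :=
    Real.log_nonpos (div_nonneg (by linarith) hp1.le) ((div_le_one hp1).mpr (by linarith))
  rw [binomWeight_eq_exp_mul ⟨hp, hpr.trans_lt hr⟩ ⟨hp.trans_le hpr, hr⟩ hkm, ← mul_assoc,
    ← Real.exp_add]
  refine mul_le_of_le_one_left (binomWeight_nonneg ⟨hp.le, hpr.trans hr.le⟩ k)
    (Real.exp_le_one_iff.mpr ?_)
  rw [bernoulliLogLR]
  linarith [mul_nonneg (sub_nonneg.mpr hkv) (sub_nonneg.mpr (hfailure.trans hsuccess))]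

lemma one_sub_le_sum_binomWeight_filter (hr : r ∈ Set.Icc 0 1) (hm : 0 < m) {d : ℝ} (hd : 0 < d) :
    1 - 1 / (m * d ^ 2) ≤ ∑ k : Fin (m + 1) with |(k.val : ℝ) - m * r| ≤ m * d,
      binomWeight m r k := by
  refine le_trans ?_ (one_sub_div_sq_le_sum_filter (binomWeight_mem_stdSimplex hr)
    (fun k : Fin (m + 1) => ((k : ℕ) : ℝ) - m * r) (y := m * d) (by positivity))
  have hvar : r * (1 - r) ≤ 1 := mul_le_one₀ hr.2 (sub_nonneg.mpr hr.2) (sub_le_self 1 hr.1)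
  rw [sum_binomWeight_mul_sub_sq, mul_pow, sq (m : ℝ), mul_assoc, mul_assoc,
    mul_div_mul_left _ _ (by positivity)]
  gcongr

lemma sum_binomWeight_filter_lt_le (hp : 0 < p) (hpr : p ≤ r) (hr : r < 1) (hm : 0 < m) {d : ℝ}
    (hd : 0 < d) :
    ∑ k : Fin (m + 1) with (k.val : ℝ) < m * (r - d), binomWeight m p k ≤
      1 - Real.exp (-(m * bernoulliLogLR p r (r + d))) * (1 - 1 / (m * d ^ 2)) := by
  have hpI : p ∈ Set.Icc 0 1 := ⟨hp.le, hpr.trans hr.le⟩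
  have hwindow : Real.exp (-(m * bernoulliLogLR p r (r + d))) * (1 - 1 / (m * d ^ 2)) ≤
      ∑ k : Fin (m + 1) with |(k.val : ℝ) - m * r| ≤ m * d, binomWeight m p k := by
    refine (mul_le_mul_of_nonneg_left (one_sub_le_sum_binomWeight_filter
      ⟨hp.le.trans hpr, hr.le⟩ hm hd) (Real.exp_pos _).le).trans ?_
    rw [mul_sum]
    refine sum_le_sum fun k hk => exp_neg_mul_binomWeight_le hp hpr hr k.is_le ?_
    linarith [(abs_le.mp (mem_filter.mp hk).2).2]
  have hsub : ∑ k : Fin (m + 1) with |(k.val : ℝ) - m * r| ≤ m * d, binomWeight m p k ≤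
      ∑ k : Fin (m + 1) with ¬ (k.val : ℝ) < m * (r - d), binomWeight m p k := by
    refine sum_le_sum_of_subset_of_nonneg (monotone_filter_right _ fun k _ hk => ?_)
      fun k _ _ => binomWeight_nonneg hpI k
    linarith [(abs_le.mp hk).1]
  linarith [(binomWeight_mem_stdSimplex (m := m) hpI).2, sum_filter_add_sum_filter_not univ
    (fun k : Fin (m + 1) => ((k : ℕ) : ℝ) < m * (r - d)) fun k => binomWeight m p k]

lemma mul_one_sub_pow_sub_sqrt_le_expMaxBinom {n : ℕ} (hn : 0 < n) (hp : p ∈ Set.Icc 0 1) (y : ℝ) :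
    y * (1 - (∑ k : Fin (m + 1) with (k.val : ℝ) < m * p + y, binomWeight m p k) ^ n) -
      √(m * (p * (1 - p))) ≤ expMaxBinom n m p - m * p := by
  have := Fin.pos_iff_nonempty.mp hn
  have hw := binomWeight_mem_stdSimplex (m := m) hp
  have hmax := mul_one_sub_pow_sub_le_expMax (ι := Fin n) hw
    (fun k : Fin (m + 1) => ((k : ℕ) : ℝ)) (m * p) y
  have hdev := sum_mul_abs_le_sqrt hw fun k : Fin (m + 1) => ((k : ℕ) : ℝ) - m * p
  rw [sum_binomWeight_mul_sub_sq, mul_assoc] at hdev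
  rw [Fintype.card_fin] at hmax
  exact (sub_le_sub_left hdev _).trans hmax

lemma tendsto_log_one_add_mul_sub_div_sq (c : ℝ) :
    Tendsto (fun x : ℝ => (Real.log (1 + c * x) - c * x) / x ^ 2) (𝓝[≠] 0) (𝓝 (-(c ^ 2 / 2))) := by
  have hlt : ∀ᶠ x : ℝ in 𝓝[≠] 0, |-(c * x)| < 1 := by
    have hcont : ContinuousAt (fun x : ℝ => |-(c * x)|) 0 := by fun_prop
    exact (hcont.eventually_lt_const (by simp)).filter_mono nhdsWithin_le_nhds
  have hbound : Tendsto (fun x : ℝ => |c| ^ 3 * |x| / (1 - |-(c * x)|)) (𝓝[≠] 0) (𝓝 0) := by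
    have hcont : ContinuousAt (fun x : ℝ => |c| ^ 3 * |x| / (1 - |-(c * x)|)) 0 := by
      refine ContinuousAt.div (by fun_prop) (by fun_prop) (by simp)
    simpa using hcont.tendsto.mono_left nhdsWithin_le_nhds
  rw [tendsto_iff_norm_sub_tendsto_zero]
  refine squeeze_zero' (.of_forall fun _ => norm_nonneg _) ?_ hbound
  filter_upwards [hlt, self_mem_nhdsWithin] with x hx hx0
  have hx0 : x ≠ 0 := hx0
  have htaylor := Real.abs_log_sub_add_sum_range_le hx 2
  norm_num [sum_range_succ] at htaylor
  calc ‖(Real.log (1 + c * x) - c * x) / x ^ 2 - -(c ^ 2 / 2)‖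
      = |-(c * x) + (c * x) ^ 2 / 2 + Real.log (1 + c * x)| / |x| ^ 2 := by
        rw [Real.norm_eq_abs, ← abs_pow, ← abs_div]
        congr 1
        field_simp
        ring
    _ ≤ (|c| * |x|) ^ 3 / (1 - |c| * |x|) / |x| ^ 2 := by gcongr
    _ = |c| ^ 3 * |x| / (1 - |-(c * x)|) := by
        rw [abs_neg, abs_mul]
        field_simp

lemma tendsto_bernoulliLogLR_div_sq (hp : p ∈ Set.Ioo 0 1) (b b' : ℝ) :
    Tendsto (fun x : ℝ => bernoulliLogLR p (p + b * x) (p + b' * x) / x ^ 2) (𝓝[≠] 0)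
      (𝓝 (b * (b' - b / 2) / (p * (1 - p)))) := by
  have hp0 : p ≠ 0 := hp.1.ne'
  have hq0 : 1 - p ≠ 0 := (sub_pos.mpr hp.2).ne'
  have hid : Tendsto (fun x : ℝ => x) (𝓝[≠] 0) (𝓝 0) := tendsto_id.mono_left nhdsWithin_le_nhds
  have hlim := ((((hid.const_mul b').const_add p).mul
    (tendsto_log_one_add_mul_sub_div_sq (b / p))).add
    (((hid.const_mul b').const_sub (1 - p)).mul
    (tendsto_log_one_add_mul_sub_div_sq (-(b / (1 - p)))))).add_const (b * b' / (p * (1 - p)))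
  have hval : (p + b' * 0) * -((b / p) ^ 2 / 2) + (1 - p - b' * 0) * -((-(b / (1 - p))) ^ 2 / 2) +
      b * b' / (p * (1 - p)) = b * (b' - b / 2) / (p * (1 - p)) := by
    field_simp
    ring
  rw [hval] at hlim
  refine hlim.congr' ?_
  filter_upwards [self_mem_nhdsWithin] with x hx
  have hx : x ≠ 0 := hx
  have hsuccess : (p + b * x) / p = 1 + b / p * x := by field_simp
  have hfailure : (1 - (p + b * x)) / (1 - p) = 1 + -(b / (1 - p)) * x := by
    field_simp
    ring
  rw [bernoulliLogLR, hsuccess, hfailure]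
  field_simp
  ring

end LowerBound

section PointwiseLimit

variable {ι : Type*} {l : Filter ι} {m n : ι → ℕ} {p a : ℝ}

lemma mul_sqrt_div {x y : ℝ} (hx : 0 < x) : x * √(y / x) = √(x * y) := by
  rw [show x * y = x ^ 2 * (y / x) by field_simp, Real.sqrt_mul (sq_nonneg x), Real.sqrt_sq hx.le]

lemma mul_sq_sqrt_div {x y : ℝ} (hx : 0 < x) (hy : 0 ≤ y) : x * √(y / x) ^ 2 = y := by
  rw [Real.sq_sqrt (by positivity), mul_div_cancel₀ _ hx.ne']

lemma tendsto_pow_of_tendsto_mul_one_sub {P : ι → ℝ} (hP : ∀ i, 0 ≤ P i)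
    (h : Tendsto (fun i => n i * (1 - P i)) l atTop) : Tendsto (fun i => P i ^ n i) l (𝓝 0) := by
  refine squeeze_zero (fun i => pow_nonneg (hP i) _) (fun i => ?_)
    (Real.tendsto_exp_neg_atTop_nhds_zero.comp h)
  calc P i ^ n i ≤ Real.exp (-(1 - P i)) ^ n i :=
        pow_le_pow_left₀ (hP i) (by linarith [Real.add_one_le_exp (-(1 - P i))]) _
    _ = Real.exp (-(n i * (1 - P i))) := by rw [← Real.exp_nat_mul, mul_neg]

lemma tendsto_log_natCast_atTop (hn : Tendsto n l atTop) :
    Tendsto (fun i => Real.log (n i)) l atTop :=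
  Real.tendsto_log_atTop.comp (tendsto_natCast_atTop_atTop.comp hn)

lemma eventually_pos_of_isLittleO_log (hn : Tendsto n l atTop)
    (hlog : (fun i => Real.log (n i)) =o[l] fun i => (m i : ℝ)) : ∀ᶠ i in l, 0 < m i := by
  filter_upwards [(tendsto_log_natCast_atTop hn).eventually_gt_atTop 0, hlog.eventuallyLE]
    with i hL hm
  rw [Real.norm_of_nonneg hL.le, Real.norm_natCast] at hm
  exact_mod_cast hL.trans_le hm

lemma tendsto_sqrt_log_div (hn : Tendsto n l atTop)
    (hlog : (fun i => Real.log (n i)) =o[l] fun i => (m i : ℝ)) :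
    Tendsto (fun i => √(Real.log (n i) / m i)) l (𝓝[>] 0) := by
  refine tendsto_nhdsWithin_iff.mpr ⟨by simpa using hlog.tendsto_div_nhds_zero.sqrt, ?_⟩
  filter_upwards [(tendsto_log_natCast_atTop hn).eventually_gt_atTop 0,
    eventually_pos_of_isLittleO_log hn hlog] with i hL hm
  exact Real.sqrt_pos.mpr (by positivity)

lemma eventually_excess_div_lt (hp : p ∈ Set.Ioo 0 1) (hn : Tendsto n l atTop)
    (hlog : (fun i => Real.log (n i)) =o[l] fun i => (m i : ℝ)) (ha : √(2 * (p * (1 - p))) < a) :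
    ∀ᶠ i in l, (expMaxBinom (n i) (m i) p - m i * p) / √(m i * Real.log (n i)) < a := by
  have hv : 0 < p * (1 - p) := mul_pos hp.1 (sub_pos.mpr hp.2)
  set w := √(2 * (p * (1 - p)))
  have hw : 0 < w := Real.sqrt_pos.mpr (by positivity)
  have hw2 : w ^ 2 = 2 * (p * (1 - p)) := Real.sq_sqrt (by positivity)
  -- `s * x` with `x = √(log n / m)` minimises the leading part of the bound `expMaxBinom_sub_le`.
  set s := 2 / w
  have hs : 0 < s := by positivity
  have hx := (tendsto_sqrt_log_div hn hlog).mono_right nhdsWithin_le_nhds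
  have hlim : Tendsto (fun i => 1 / s + p * (1 - p) * (s / 2 + s ^ 2 * √(Real.log (n i) / m i))) l
      (𝓝 w) := by
    have hval : 1 / s + p * (1 - p) * (s / 2 + s ^ 2 * 0) = w := by
      rw [show p * (1 - p) = w ^ 2 / 2 by linarith]
      simp only [s]
      field_simp
      ring
    exact hval ▸ (((hx.const_mul (s ^ 2)).const_add (s / 2)).const_mul (p * (1 - p))).const_add _
  have hsx : Tendsto (fun i => s * √(Real.log (n i) / m i)) l (𝓝 0) := by
    simpa using hx.const_mul s
  filter_upwards [hlim.eventually_lt_const ha, hsx.eventually_le_const one_pos,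
    (tendsto_log_natCast_atTop hn).eventually_gt_atTop 0, hn.eventually_gt_atTop 0,
    eventually_pos_of_isLittleO_log hn hlog] with i hlt hsx1 hL hn0 hm
  have hR := mul_sqrt_div (y := Real.log (n i)) (Nat.cast_pos.mpr hm)
  have hx2 := mul_sq_sqrt_div (Nat.cast_pos.mpr hm) hL.le
  have hx0 : 0 < √(Real.log (n i) / m i) := Real.sqrt_pos.mpr (by positivity)
  set x := √(Real.log (n i) / m i)
  refine lt_of_le_of_lt ?_ hlt
  rw [← hR, div_le_iff₀ (by positivity)]
  refine (expMaxBinom_sub_le hn0 ⟨hp.1.le, hp.2.le⟩ (mul_pos hs hx0) hsx1).trans_eq ?_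
  rw [← hx2]
  field_simp

-- The quotient is the limit in `tendsto_bernoulliLogLR_div_sq` for the shifts `a + η` and
-- `a + 2 * η`; at `η = 0` it equals `a ^ 2 / (2 * p * (1 - p))`.
lemma exists_pos_mul_div_lt_one (hp : p ∈ Set.Ioo 0 1) (ha : 0 ≤ a)
    (haw : a < √(2 * (p * (1 - p)))) :
    ∃ η > 0, (a + η) * (a + 2 * η - (a + η) / 2) / (p * (1 - p)) < 1 := by
  have hv : 0 < p * (1 - p) := mul_pos hp.1 (sub_pos.mpr hp.2)
  have hcont : ContinuousAt
      (fun η => (a + η) * (a + 2 * η - (a + η) / 2) / (p * (1 - p))) 0 := by fun_prop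
  have hzero : (a + 0) * (a + 2 * 0 - (a + 0) / 2) / (p * (1 - p)) < 1 := by
    rw [div_lt_one hv]
    linarith [(Real.lt_sqrt ha).mp haw]
  exact ((eventually_mem_nhdsWithin (s := Set.Ioi 0)).and
    ((hcont.eventually_lt_const hzero).filter_mono nhdsWithin_le_nhds)).exists

lemma sum_binomWeight_filter_lt_le_of_logLR_le {m : ℕ} {x η κ : ℝ} (hp : 0 < p) (ha : 0 ≤ a)
    (hη : 0 < η) (hx : 0 < x) (hr : p + (a + η) * x < 1) (hm : 0 < m)
    (hLR : bernoulliLogLR p (p + (a + η) * x) (p + (a + 2 * η) * x) ≤ κ * x ^ 2)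
    (hηx : 2 ≤ η ^ 2 * (m * x ^ 2)) :
    ∑ k : Fin (m + 1) with (k.val : ℝ) < m * p + a * (m * x), binomWeight m p k ≤
      1 - Real.exp (-(κ * (m * x ^ 2))) / 2 := by
  have hexp : Real.exp (-(κ * (m * x ^ 2))) ≤
      Real.exp (-(m * bernoulliLogLR p (p + (a + η) * x) (p + (a + η) * x + η * x))) := by
    rw [show p + (a + η) * x + η * x = p + (a + 2 * η) * x by ring]
    refine Real.exp_le_exp.mpr (neg_le_neg ?_)
    exact (mul_le_mul_of_nonneg_left hLR m.cast_nonneg).trans_eq (by ring)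
  have hhalf : 1 / 2 ≤ 1 - 1 / (m * (η * x) ^ 2) := by
    rw [show m * (η * x) ^ 2 = η ^ 2 * (m * x ^ 2) by ring]
    linarith [one_div_le_one_div_of_le two_pos hηx]
  have htail := sum_binomWeight_filter_lt_le hp
    (le_add_of_nonneg_right (by positivity : 0 ≤ (a + η) * x)) hr hm (mul_pos hη hx)
  rw [show m * (p + (a + η) * x - η * x) = m * p + a * (m * x) by ring] at htail
  refine htail.trans (sub_le_sub_left ?_ 1)
  rw [div_eq_mul_one_div]
  gcongr

-- As `κ < 1`, the expected number of exceedances among `n` samples, at least `n ^ (1 - κ) / 2`,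
-- tends to infinity.
lemma exists_eventually_sum_binomWeight_le (hp : p ∈ Set.Ioo 0 1) (hn : Tendsto n l atTop)
    (hlog : (fun i => Real.log (n i)) =o[l] fun i => (m i : ℝ)) (ha : 0 ≤ a)
    (haw : a < √(2 * (p * (1 - p)))) :
    ∃ κ < 1, ∀ᶠ i in l, ∑ k : Fin (m i + 1) with
      (k.val : ℝ) < m i * p + a * √(m i * Real.log (n i)), binomWeight (m i) p k ≤
        1 - Real.exp (-(κ * Real.log (n i))) / 2 := by
  obtain ⟨η, hη, hη1⟩ := exists_pos_mul_div_lt_one hp ha haw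
  obtain ⟨κ, hηκ, hκ⟩ := exists_between hη1
  refine ⟨κ, hκ, ?_⟩
  have hx := tendsto_sqrt_log_div hn hlog
  have hLR := ((tendsto_bernoulliLogLR_div_sq hp (a + η) (a + 2 * η)).comp
    (hx.mono_right (nhdsGT_le_nhdsNE 0))).eventually_lt_const hηκ
  have hr : Tendsto (fun i => p + (a + η) * √(Real.log (n i) / m i)) l (𝓝 p) := by
    simpa using ((hx.mono_right nhdsWithin_le_nhds).const_mul (a + η)).const_add p
  filter_upwards [hLR, hr.eventually_lt_const hp.2, hx.eventually self_mem_nhdsWithin,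
    (tendsto_log_natCast_atTop hn).eventually_ge_atTop (2 / η ^ 2),
    eventually_pos_of_isLittleO_log hn hlog] with i hLR hr1 hx0 hL hm
  have hx0 : 0 < √(Real.log (n i) / m i) := hx0
  have hx2 := mul_sq_sqrt_div (Nat.cast_pos.mpr hm) (le_trans (by positivity) hL)
  rw [← mul_sqrt_div (Nat.cast_pos.mpr hm)]
  refine (sum_binomWeight_filter_lt_le_of_logLR_le hp.1 ha hη hx0 hr1 hm
    ((div_le_iff₀ (by positivity)).mp hLR.le) ?_).trans_eq (by rw [hx2])
  rw [hx2]
  exact (div_le_iff₀' (by positivity)).mp hL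

lemma tendsto_sum_binomWeight_pow (hp : p ∈ Set.Ioo 0 1) (hn : Tendsto n l atTop)
    (hlog : (fun i => Real.log (n i)) =o[l] fun i => (m i : ℝ)) (ha : 0 ≤ a)
    (haw : a < √(2 * (p * (1 - p)))) :
    Tendsto (fun i => (∑ k : Fin (m i + 1) with
      (k.val : ℝ) < m i * p + a * √(m i * Real.log (n i)), binomWeight (m i) p k) ^ n i) l
      (𝓝 0) := by
  obtain ⟨κ, hκ, htail⟩ := exists_eventually_sum_binomWeight_le hp hn hlog ha haw
  refine tendsto_pow_of_tendsto_mul_one_sub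
    (fun i => sum_nonneg fun k _ => binomWeight_nonneg ⟨hp.1.le, hp.2.le⟩ k) ?_
  have hgrowth : Tendsto (fun i => Real.exp ((1 - κ) * Real.log (n i)) / 2) l atTop :=
    (Real.tendsto_exp_atTop.comp ((tendsto_log_natCast_atTop hn).const_mul_atTop
      (sub_pos.mpr hκ))).atTop_div_const two_pos
  refine tendsto_atTop_mono' l ?_ hgrowth
  filter_upwards [htail, hn.eventually_gt_atTop 0] with i htail hn0
  have hn0 : (0 : ℝ) < n i := Nat.cast_pos.mpr hn0
  calc Real.exp ((1 - κ) * Real.log (n i)) / 2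
      = n i * (Real.exp (-(κ * Real.log (n i))) / 2) := by
        rw [sub_mul, one_mul, sub_eq_add_neg, Real.exp_add, Real.exp_log hn0, mul_div_assoc]
    _ ≤ _ := mul_le_mul_of_nonneg_left (le_sub_comm.mp htail) hn0.le

lemma eventually_lt_excess_div (hp : p ∈ Set.Ioo 0 1) (hn : Tendsto n l atTop)
    (hlog : (fun i => Real.log (n i)) =o[l] fun i => (m i : ℝ)) (ha : a < √(2 * (p * (1 - p)))) :
    ∀ᶠ i in l, a < (expMaxBinom (n i) (m i) p - m i * p) / √(m i * Real.log (n i)) := by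
  have hw : 0 < √(2 * (p * (1 - p))) := Real.sqrt_pos.mpr
    (mul_pos two_pos (mul_pos hp.1 (sub_pos.mpr hp.2)))
  obtain ⟨a', haa', ha'w⟩ := exists_between (max_lt ha hw)
  obtain ⟨haa', ha'0⟩ := max_lt_iff.mp haa'
  have hdev : Tendsto (fun i => √(p * (1 - p)) / √(Real.log (n i))) l (𝓝 0) :=
    (Real.tendsto_sqrt_atTop.comp (tendsto_log_natCast_atTop hn)).const_div_atTop _
  have hlim : Tendsto (fun i => a' * (1 - (∑ k : Fin (m i + 1) with
      (k.val : ℝ) < m i * p + a' * √(m i * Real.log (n i)), binomWeight (m i) p k) ^ n i) -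
      √(p * (1 - p)) / √(Real.log (n i))) l (𝓝 a') := by
    simpa using (((tendsto_sum_binomWeight_pow hp hn hlog ha'0.le ha'w).const_sub 1).const_mul
      a').sub hdev
  filter_upwards [hlim.eventually_const_lt haa',
    (tendsto_log_natCast_atTop hn).eventually_gt_atTop 0, hn.eventually_gt_atTop 0,
    eventually_pos_of_isLittleO_log hn hlog] with i hlt hL hn0 hm
  refine hlt.trans_le ?_
  have hR : √(p * (1 - p)) / √(Real.log (n i)) * √(m i * Real.log (n i)) =
      √(m i * (p * (1 - p))) := by
    rw [Real.sqrt_mul (m i).cast_nonneg, Real.sqrt_mul (m i).cast_nonneg]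
    have : √(Real.log (n i)) ≠ 0 := (Real.sqrt_pos.mpr hL).ne'
    field_simp
  rw [le_div_iff₀ (Real.sqrt_pos.mpr (by positivity)), sub_mul, hR, mul_right_comm]
  exact mul_one_sub_pow_sub_sqrt_le_expMaxBinom hn0 ⟨hp.1.le, hp.2.le⟩ _

lemma tendsto_excess_div (hp : p ∈ Set.Ioo 0 1) (hn : Tendsto n l atTop)
    (hlog : (fun i => Real.log (n i)) =o[l] fun i => (m i : ℝ)) :
    Tendsto (fun i => (expMaxBinom (n i) (m i) p - m i * p) / √(m i * Real.log (n i))) l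
      (𝓝 √(2 * (p * (1 - p)))) :=
  tendsto_order.mpr ⟨fun _ ha => eventually_lt_excess_div hp hn hlog ha,
    fun _ ha => eventually_excess_div_lt hp hn hlog ha⟩

end PointwiseLimit

section IntegralLimit

variable {ι : Type*} {l : Filter ι} {m n : ι → ℕ}

lemma sqrt_mul_one_sub_div {p : ℝ} (hp : p ∈ Set.Icc 0 1) :
    √(2 * (p * (1 - p))) / p = √2 * (p ^ ((1 / 2 : ℝ) - 1) * (1 - p) ^ ((3 / 2 : ℝ) - 1)) := by
  rw [Real.sqrt_mul zero_le_two, Real.sqrt_mul hp.1, mul_div_assoc, mul_div_right_comm,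
    Real.sqrt_div_self, Real.sqrt_eq_rpow p, ← Real.rpow_neg hp.1, Real.sqrt_eq_rpow (1 - p)]
  norm_num

lemma integral_sqrt_mul_one_sub_div :
    ∫ p in (0 : ℝ)..1, √(2 * (p * (1 - p))) / p = Real.pi / √2 := by
  rw [intervalIntegral.integral_congr fun p hp => sqrt_mul_one_sub_div
      (by rwa [Set.uIcc_of_le zero_le_one] at hp), intervalIntegral.integral_const_mul,
    integral_rpow_mul_one_sub_rpow (by norm_num) (by norm_num), ProbabilityTheory.beta,
    show (1 / 2 : ℝ) + 3 / 2 = 2 by norm_num, show (3 / 2 : ℝ) = 1 / 2 + 1 by norm_num,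
    Real.Gamma_add_one (by norm_num), Real.Gamma_two, Real.Gamma_one_half_eq,
    mul_left_comm √Real.pi, Real.mul_self_sqrt Real.pi_pos.le, eq_div_iff (by positivity)]
  linear_combination Real.pi / 2 * Real.mul_self_sqrt zero_le_two

lemma intervalIntegrable_excessRatio_of_mem (n m : ℕ) {a b : ℝ} (ha : a ∈ Set.Icc 0 1)
    (hb : b ∈ Set.Icc 0 1) : IntervalIntegrable (excessRatio n m) MeasureTheory.volume a b :=
  (intervalIntegrable_excessRatio n m).mono_set
    ((Set.uIcc_subset_Icc ha hb).trans_eq (Set.uIcc_of_le zero_le_one).symm)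

lemma integral_excessRatio_le_one {n m : ℕ} (hn : 0 < n) (hm : 0 < m) :
    ∫ p in (0 : ℝ)..1 / (n * m), excessRatio n m p ≤ 1 := by
  have hnm : (1 : ℝ) ≤ n * m := by exact_mod_cast Nat.mul_pos hn hm
  have hσ : 1 / (n * m : ℝ) ∈ Set.Icc 0 1 := ⟨by positivity, div_le_one_of_le₀ hnm (by positivity)⟩
  calc ∫ p in (0 : ℝ)..1 / (n * m), excessRatio n m p
      ≤ ∫ _ in (0 : ℝ)..1 / (n * m), (n * m : ℝ) :=
        intervalIntegral.integral_mono_on hσ.1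
          (intervalIntegrable_excessRatio_of_mem n m (by simp) hσ) (by simp)
          fun p hp => excessRatio_le_mul hn ⟨hp.1, hp.2.trans hσ.2⟩
    _ = 1 := by
        rw [intervalIntegral.integral_const, smul_eq_mul, sub_zero]
        field_simp

lemma integral_excessRatio_le_log_mul {n m : ℕ} (hn : 0 < n) (hm : 0 < m) (hL : 1 ≤ Real.log n)
    (hLm : Real.log n ≤ m) :
    ∫ p in 1 / (n * m : ℝ)..Real.log n / m, excessRatio n m p ≤
      3 * Real.log n * Real.log (n * Real.log n) := by
  have hm0 : (0 : ℝ) < m := Nat.cast_pos.mpr hm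
  have hn1 : (1 : ℝ) ≤ n := Nat.one_le_cast.mpr hn
  have hστ : 1 / (n * m : ℝ) ≤ Real.log n / m := by
    rw [← div_div]
    gcongr
    exact (div_le_one_of_le₀ hn1 (by positivity)).trans hL
  have hτ1 : Real.log n / m ≤ 1 := div_le_one_of_le₀ hLm hm0.le
  have hσ0 : 0 < 1 / (n * m : ℝ) := by positivity
  calc ∫ p in 1 / (n * m : ℝ)..Real.log n / m, excessRatio n m p
      ≤ ∫ p in 1 / (n * m : ℝ)..Real.log n / m, 3 * Real.log n * p⁻¹ :=
        intervalIntegral.integral_mono_on hστ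
          (intervalIntegrable_excessRatio_of_mem n m ⟨hσ0.le, hστ.trans hτ1⟩
            ⟨hσ0.le.trans hστ, hτ1⟩)
          ((intervalIntegrable_inv_iff.mpr
            (.inr (Set.notMem_uIcc_of_lt hσ0 (hσ0.trans_le hστ)))).const_mul _)
          fun p hp => excessRatio_le_log_div hn ⟨hσ0.le.trans hp.1, hp.2.trans hτ1⟩
            ((le_div_iff₀' hm0).mp hp.2)
    _ = 3 * Real.log n * Real.log (n * Real.log n) := by
        rw [intervalIntegral.integral_const_mul,
          integral_inv_of_pos hσ0 (hσ0.trans_le hστ)]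
        congr 2
        field_simp

lemma integral_excessRatio_le_log_sq {n m : ℕ} (hL : 1 ≤ Real.log n) (hLm : Real.log n ≤ m) :
    ∫ p in (0 : ℝ)..Real.log n / m, excessRatio n m p ≤ 7 * Real.log n ^ 2 := by
  have hm : 0 < m := Nat.cast_pos.mp (one_pos.trans_le (hL.trans hLm))
  have hn : 0 < n := Nat.pos_of_ne_zero fun h => by norm_num [h] at hL
  have hnm : (1 : ℝ) ≤ n * m := by exact_mod_cast Nat.mul_pos hn hm
  have hσ : 1 / (n * m : ℝ) ∈ Set.Icc 0 1 := ⟨by positivity, div_le_one_of_le₀ hnm (by positivity)⟩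
  have hτ : Real.log n / m ∈ Set.Icc 0 1 :=
    ⟨by positivity, div_le_one_of_le₀ hLm m.cast_nonneg⟩
  have hloglog : Real.log (n * Real.log n) ≤ 2 * Real.log n := by
    rw [Real.log_mul (by positivity) (by positivity)]
    linarith [Real.log_le_self (zero_le_one.trans hL)]
  rw [← intervalIntegral.integral_add_adjacent_intervals
    (intervalIntegrable_excessRatio_of_mem n m (by simp) hσ)
    (intervalIntegrable_excessRatio_of_mem n m hσ hτ)]
  nlinarith [integral_excessRatio_le_one hn hm, integral_excessRatio_le_log_mul hn hm hL hLm]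

lemma isLittleO_log_of_isLittleO_log_cube (hn : Tendsto n l atTop)
    (hcube : (fun i => Real.log (n i) ^ 3) =o[l] fun i => (m i : ℝ)) :
    (fun i => Real.log (n i)) =o[l] fun i => (m i : ℝ) := by
  refine IsBigO.trans_isLittleO (.of_bound 1 ?_) hcube
  filter_upwards [(tendsto_log_natCast_atTop hn).eventually_ge_atTop 1] with i hL
  rw [one_mul, norm_pow]
  exact le_self_pow₀ (hL.trans (Real.le_norm_self _)) three_ne_zero

lemma tendsto_integral_excessRatio_div_zero (hn : Tendsto n l atTop)
    (hcube : (fun i => Real.log (n i) ^ 3) =o[l] fun i => (m i : ℝ)) :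
    Tendsto (fun i => (∫ p in (0 : ℝ)..Real.log (n i) / m i, excessRatio (n i) (m i) p) /
      √(m i * Real.log (n i))) l (𝓝 0) := by
  have hbound : Tendsto (fun i => 7 * √(Real.log (n i) ^ 3 / m i)) l (𝓝 0) := by
    simpa using hcube.tendsto_div_nhds_zero.sqrt.const_mul 7
  have hlog := isLittleO_log_of_isLittleO_log_cube hn hcube
  refine squeeze_zero' ?_ ?_ hbound
  all_goals
    filter_upwards [(tendsto_log_natCast_atTop hn).eventually_ge_atTop 1, hlog.eventuallyLE,
      hn.eventually_gt_atTop 0] with i hL hLm hn0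
    rw [Real.norm_of_nonneg (zero_le_one.trans hL), Real.norm_natCast] at hLm
    have hm0 : (0 : ℝ) < m i := one_pos.trans_le (hL.trans hLm)
  · refine div_nonneg (intervalIntegral.integral_nonneg (by positivity) fun p hp => ?_)
      (Real.sqrt_nonneg _)
    exact excessRatio_nonneg hn0 ⟨hp.1, hp.2.trans (div_le_one_of_le₀ hLm hm0.le)⟩
  · have hsq : √(Real.log (n i) ^ 3 / m i) * √(m i * Real.log (n i)) = Real.log (n i) ^ 2 := by
      rw [← Real.sqrt_mul (by positivity), ← Real.sqrt_sq (sq_nonneg (Real.log (n i)))]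
      congr 1
      field_simp
    rw [div_le_iff₀ (Real.sqrt_pos.mpr (by positivity)), mul_assoc, hsq]
    exact integral_excessRatio_le_log_sq hL hLm

lemma norm_indicator_excessRatio_div_le {n m : ℕ} {p : ℝ} (hn : 1 < n) (hm : 0 < m)
    (hp : p ∈ Set.Icc 0 1) :
    ‖(Set.Ioi (Real.log n / m)).indicator (fun p => excessRatio n m p / √(m * Real.log n)) p‖ ≤
      3 * p ^ (-(1 / 2) : ℝ) := by
  have hL : 0 < Real.log n := Real.log_pos (Nat.one_lt_cast.mpr hn)
  have hm0 : (0 : ℝ) < m := Nat.cast_pos.mpr hm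
  refine (norm_indicator_eq_indicator_norm _ p).trans_le
    (Set.indicator_apply_le' (fun hτ => ?_) fun _ => ?_)
  · rw [Real.norm_of_nonneg (div_nonneg (excessRatio_nonneg (one_pos.trans hn) hp)
      (Real.sqrt_nonneg _)), div_le_iff₀' (Real.sqrt_pos.mpr (by positivity))]
    exact excessRatio_le_sqrt_mul hn hp ((div_lt_iff₀' hm0).mp hτ).le
  · exact mul_nonneg zero_le_three (Real.rpow_nonneg hp.1 _)

lemma tendsto_indicator_excessRatio_div {p : ℝ} (hp : p ∈ Set.Ioo 0 1) (hn : Tendsto n l atTop)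
    (hlog : (fun i => Real.log (n i)) =o[l] fun i => (m i : ℝ)) :
    Tendsto (fun i => (Set.Ioi (Real.log (n i) / m i)).indicator
      (fun p => excessRatio (n i) (m i) p / √(m i * Real.log (n i))) p) l
      (𝓝 (√(2 * (p * (1 - p))) / p)) := by
  refine ((tendsto_excess_div hp hn hlog).div_const p).congr' ?_
  filter_upwards [hlog.tendsto_div_nhds_zero.eventually_lt_const hp.1] with i hτ
  rw [Set.indicator_of_mem (Set.mem_Ioi.mpr hτ), excessRatio, div_right_comm]

lemma tendsto_integral_excessRatio_div [l.IsCountablyGenerated] (hn : Tendsto n l atTop)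
    (hlog : (fun i => Real.log (n i)) =o[l] fun i => (m i : ℝ)) :
    Tendsto (fun i => (∫ p in Real.log (n i) / m i..1, excessRatio (n i) (m i) p) /
      √(m i * Real.log (n i))) l (𝓝 (Real.pi / √2)) := by
  have hτ0 : Tendsto (fun i => Real.log (n i) / m i) l (𝓝 0) := hlog.tendsto_div_nhds_zero
  have hmem : ∀ᶠ i in l, Real.log (n i) / m i ∈ Set.Icc 0 1 := by
    filter_upwards [hτ0.eventually_le_const one_pos] with i hi
    exact ⟨by positivity, hi⟩
  rw [← integral_sqrt_mul_one_sub_div]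
  have hdom : Tendsto (fun i => ∫ p in (0 : ℝ)..1, (Set.Ioi (Real.log (n i) / m i)).indicator
      (fun p => excessRatio (n i) (m i) p / √(m i * Real.log (n i))) p) l
      (𝓝 (∫ p in (0 : ℝ)..1, √(2 * (p * (1 - p))) / p)) := by
    refine intervalIntegral.tendsto_integral_filter_of_dominated_convergence
      (fun p => 3 * p ^ (-(1 / 2) : ℝ)) ?_ ?_ ?_ ?_
    · exact .of_forall fun i => ((intervalIntegrable_excessRatio _ _).def'.div_const
        _).aestronglyMeasurable.indicator measurableSet_Ioi
    · filter_upwards [hn.eventually_gt_atTop 1, eventually_pos_of_isLittleO_log hn hlog]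
        with i hn1 hm
      refine .of_forall fun p hp => norm_indicator_excessRatio_div_le hn1 hm ?_
      rw [Set.uIoc_of_le zero_le_one] at hp
      exact Set.Ioc_subset_Icc_self hp
    · exact (intervalIntegral.intervalIntegrable_rpow' (by norm_num)).const_mul 3
    · filter_upwards [MeasureTheory.volume.ae_ne (1 : ℝ)] with p hp1 hp
      rw [Set.uIoc_of_le zero_le_one] at hp
      exact tendsto_indicator_excessRatio_div ⟨hp.1, hp.2.lt_of_ne hp1⟩ hn hlog
  refine hdom.congr' ?_
  filter_upwards [hmem] with i hi
  rw [intervalIntegral.integral_of_le zero_le_one, MeasureTheory.setIntegral_indicator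
    measurableSet_Ioi, Set.Ioc_inter_Ioi, sup_of_le_right hi.1,
    ← intervalIntegral.integral_of_le hi.2, intervalIntegral.integral_div]

end IntegralLimit

lemma isLittleO_log_cube_of_rpow_le {ι : Type*} {l : Filter ι} {m n : ι → ℕ} {c ε : ℝ}
    (hε : 0 < ε) (hn : Tendsto n l atTop)
    (h : ∀ᶠ i in l, Real.log (n i) ^ (3 + ε) ≤ c * m i) :
    (fun i => Real.log (n i) ^ 3) =o[l] fun i => (m i : ℝ) := by
  have hpow : (fun i => Real.log (n i) ^ 3) =o[l] fun i => Real.log (n i) ^ (3 + ε) := by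
    have hL := tendsto_log_natCast_atTop hn
    refine isLittleO_of_tendsto' ?_ (((tendsto_rpow_neg_atTop hε).comp hL).congr' ?_)
    all_goals filter_upwards [hL.eventually_gt_atTop 0] with i hL
    · exact fun h0 => absurd h0 (Real.rpow_pos_of_pos hL _).ne'
    · rw [Function.comp_apply, ← Real.rpow_natCast, ← Real.rpow_sub hL]
      congr 1
      push_cast
      ring
  refine hpow.trans_isBigO (.of_bound c ?_)
  filter_upwards [h] with i hi
  rwa [Real.norm_of_nonneg (Real.rpow_nonneg (Real.log_natCast_nonneg _) _), Real.norm_natCast]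

theorem stmt0_general {ι : Type*} {l : Filter ι} [l.IsCountablyGenerated] {m n : ι → ℕ}
    (hn : Tendsto n l atTop)
    (hcube : (fun i => Real.log (n i) ^ 3) =o[l] fun i => (m i : ℝ)) :
    (fun i => S (n i) (m i) - m i - Real.pi / √2 * √(m i * Real.log (n i))) =o[l]
      fun i => √(m i * Real.log (n i)) := by
  have hlog := isLittleO_log_of_isLittleO_log_cube hn hcube
  have hR : ∀ᶠ i in l, 0 < √(m i * Real.log (n i)) := by
    filter_upwards [(tendsto_log_natCast_atTop hn).eventually_gt_atTop 0,
      eventually_pos_of_isLittleO_log hn hlog] with i hL hm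
    exact Real.sqrt_pos.mpr (by positivity)
  have hlim := ((tendsto_integral_excessRatio_div_zero hn hcube).add
    (tendsto_integral_excessRatio_div hn hlog)).sub_const (Real.pi / √2)
  rw [zero_add, sub_self] at hlim
  refine isLittleO_of_tendsto' (hR.mono fun i hi h0 => absurd h0 hi.ne') (hlim.congr' ?_)
  filter_upwards [hR, hlog.tendsto_div_nhds_zero.eventually_le_const one_pos] with i hi hτ1
  have hτ : Real.log (n i) / m i ∈ Set.Icc 0 1 := ⟨by positivity, hτ1⟩
  rw [← add_div, intervalIntegral.integral_add_adjacent_intervals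
    (intervalIntegrable_excessRatio_of_mem _ _ (by simp) hτ)
    (intervalIntegrable_excessRatio_of_mem _ _ hτ (by simp)), integral_excessRatio,
    sub_div (S _ _ - _), mul_div_cancel_right₀ _ hi.ne']

theorem stmt0 (c ε : ℝ) (hc : 0 < c) (hε : 0 < ε) :
    ∀ δ > 0, ∃ N : ℕ, ∀ m n : ℕ, N ≤ m → N ≤ n →
      (Real.log n) ^ ((3 : ℝ) + ε) ≤ c * m →
      |S n m - m - Real.pi / Real.sqrt 2 * Real.sqrt (m * Real.log n)| ≤
        δ * Real.sqrt (m * Real.log n) := by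
  intro δ hδ
  let regime : Filter (ℕ × ℕ) := atTop ⊓ 𝓟 {q | Real.log q.2 ^ (3 + ε) ≤ c * q.1}
  have hn : Tendsto Prod.snd regime atTop :=
    (prod_atTop_atTop_eq (α := ℕ) (β := ℕ) ▸ tendsto_snd).mono_left inf_le_left
  have hcube := isLittleO_log_cube_of_rpow_le (m := Prod.fst) hε hn
    (eventually_inf_principal.mpr (.of_forall fun _ => id))
  simpa [abs_of_nonneg] using
    eventually_atTop_prod_self.mp (eventually_inf_principal.mp ((stmt0_general hn hcube).def hδ))
end

section
/- Fix an integer m ≥ 1. There exists a constant C_m > 0 such that for all n ≥ 1, |S_{n,m} − H_m·H_n − Σ_{j=1}^{m−1} (1/j)·ln C(m,j)| ≤ C_m · n^{−1/m}, where H_k = 1 + 1/2 + ... + 1/k denotes the k-th harmonic number and C(m,j) is the binomial coefficient. -/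
open Finset

/-- The `k`-th harmonic number `H_k = 1 + 1/2 + ⋯ + 1/k`. -/
noncomputable def harmonicNum (k : ℕ) : ℝ :=
  ∑ i ∈ Finset.Icc 1 k, (1 : ℝ) / i

/-!
Choose the number of bottom cards from the binomial law with parameters `nm` and `p`. This makes
the counts `X_i` independent binomial variables with parameters `m` and `p`, and the Beta integral
`∫ C(nm, t) p ^ (t - 1) (1 - p) ^ (nm - t) dp = 1 / t` over `[0, 1]` supplies the weight `1 / t`.
Hence `S n m` is the integral of `𝔼_p[max X_i] / p`, that is, the sum over `1 ≤ k ≤ m` of the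
integrals of `(1 - (1 - T_k p) ^ n) / p`, where `T_k p` is the probability that a binomial variable
is at least `k`.

Write `T_k p = p ^ k * Q_k p`, so that `k / p = T_k' / T_k - Q_k' / Q_k`. Substituting `u = T_k p`
turns the first part into `H_n`. Since `Q_k 0 = C(m, k)` and `Q_k 1 = 1`, the second part gives
`log C(m, k)`, up to the integral of `Q_k' / Q_k * (1 - T_k) ^ n`, which is `O(n ^ (-1 / k))`
because `T_k p` is at least a constant times `p ^ k`.
-/

open Asymptotics Filter Polynomial intervalIntegral

lemma succ_mul_bernsteinPolynomial_succ_succ (R : Type*) [CommRing R] (n ν : ℕ) :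
    ((ν : R[X]) + 1) * bernsteinPolynomial R (n + 1) (ν + 1) =
      ((n : R[X]) + 1) * X * bernsteinPolynomial R n ν := by
  have hchoose : ((n + 1 : ℕ) : R[X]) * n.choose ν = (n + 1).choose (ν + 1) * (ν + 1 : ℕ) :=
    mod_cast congr_arg (Nat.cast (R := R[X])) (Nat.add_one_mul_choose_eq n ν)
  push_cast at hchoose
  rw [bernsteinPolynomial, bernsteinPolynomial, Nat.add_sub_add_right]
  linear_combination -(X ^ (ν + 1)) * (1 - X) ^ (n - ν) * hchoose

-- The difference of two neighbouring integrals is an integral of the derivative of a Bernstein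
-- polynomial vanishing at both end points, so the integrals do not depend on `ν`.
lemma integral_eval_bernsteinPolynomial {n ν : ℕ} (h : ν ≤ n) :
    ∫ p in (0 : ℝ)..1, (bernsteinPolynomial ℝ n ν).eval p = 1 / (n + 1) := by
  induction h using Nat.decreasingInduction with
  | self => simp [bernsteinPolynomial]
  | of_succ ν hν ih =>
    have hderiv := integral_eq_sub_of_hasDerivAt (a := 0) (b := 1)
      (fun p _ => (bernsteinPolynomial ℝ (n + 1) (ν + 1)).hasDerivAt p)
      (Continuous.intervalIntegrable (by fun_prop) _ _)
    have hdiff : (n + 1 : ℝ) * ((∫ p in (0 : ℝ)..1, (bernsteinPolynomial ℝ n ν).eval p) -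
        ∫ p in (0 : ℝ)..1, (bernsteinPolynomial ℝ n (ν + 1)).eval p) = 0 := by
      rw [← integral_sub (Continuous.intervalIntegrable (by fun_prop) _ _)
        (Continuous.intervalIntegrable (by fun_prop) _ _), ← integral_const_mul]
      simpa [bernsteinPolynomial.derivative_succ_aux, bernsteinPolynomial.eval_at_0,
        bernsteinPolynomial.eval_at_1, hν.ne] using hderiv
    rw [← ih]
    exact sub_eq_zero.mp ((mul_eq_zero.mp hdiff).resolve_left (by positivity))

lemma integral_eval_bernsteinPolynomial_div_self {n ν : ℕ} (hν : ν ≠ 0) (h : ν ≤ n) :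
    ∫ p in (0 : ℝ)..1, (bernsteinPolynomial ℝ n ν).eval p / p = 1 / ν := by
  obtain ⟨ν, rfl⟩ := Nat.exists_eq_succ_of_ne_zero hν
  obtain ⟨n, rfl⟩ := Nat.exists_eq_succ_of_ne_zero (Nat.ne_zero_of_lt h)
  have hdiv : ∀ p ∈ Set.Ioo (0 : ℝ) 1, (bernsteinPolynomial ℝ (n + 1) (ν + 1)).eval p / p =
      (n + 1) / (ν + 1) * (bernsteinPolynomial ℝ n ν).eval p := by
    intro p hp
    have hp0 : p ≠ 0 := hp.1.ne'
    have hsucc := congr_arg (eval p) (succ_mul_bernsteinPolynomial_succ_succ ℝ n ν)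
    simp only [eval_mul, eval_add, eval_natCast, eval_one, eval_X] at hsucc
    field_simp
    linear_combination hsucc
  rw [integral_congr_Ioo_of_le zero_le_one hdiv, integral_const_mul,
    integral_eval_bernsteinPolynomial (Nat.le_of_succ_le_succ h)]
  push_cast
  field_simp

lemma choose_mul_prod_bernsteinPolynomial (R : Type*) [CommRing R] {ι : Type*} (s : Finset ι)
    {N ν : ι → ℕ} (h : ∀ i ∈ s, ν i ≤ N i) :
    ((∑ i ∈ s, N i).choose (∑ i ∈ s, ν i) : R[X]) * ∏ i ∈ s, bernsteinPolynomial R (N i) (ν i) =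
      (∏ i ∈ s, ((N i).choose (ν i) : R[X])) *
        bernsteinPolynomial R (∑ i ∈ s, N i) (∑ i ∈ s, ν i) := by
  simp only [bernsteinPolynomial, Finset.prod_mul_distrib, Finset.prod_pow_eq_pow_sum,
    Finset.sum_tsub_distrib s h]
  ring

lemma intervalIntegrable_eval_div_self {P : ℝ[X]} (hP : P.eval 0 = 0) (a b : ℝ) :
    IntervalIntegrable (fun p => P.eval p / p) MeasureTheory.volume a b := by
  obtain ⟨P, rfl⟩ := X_dvd_iff.mpr (coeff_zero_eq_eval_zero P ▸ hP)
  have hdiv : (fun p => P.eval p) =ᵐ[MeasureTheory.volume] fun p => (X * P).eval p / p := by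
    filter_upwards [MeasureTheory.Measure.ae_ne MeasureTheory.volume 0] with p hp
    rw [eval_mul, eval_X, mul_div_cancel_left₀ _ hp]
  exact IntervalIntegrable.congr_ae (Continuous.intervalIntegrable (by fun_prop) a b)
    (MeasureTheory.ae_restrict_of_ae hdiv)

section MaxEntry

variable {n m : ℕ}

lemma maxEntry_le (j : Fin n → Fin (m + 1)) : maxEntry j ≤ m :=
  Finset.sup_le fun i _ => Nat.lt_succ_iff.mp (j i).2

lemma maxEntry_lt_iff {k : ℕ} (hk : 0 < k) {j : Fin n → Fin (m + 1)} :
    maxEntry j < k ↔ ∀ i, (j i : ℕ) < k := by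
  simp [maxEntry, Finset.sup_lt_iff (show ⊥ < k from hk)]

lemma sum_filter_maxEntry_lt_prod {R : Type*} [CommSemiring R] (b : ℕ → R) {k : ℕ} (hk : 0 < k)
    (hkm : k ≤ m + 1) :
    ∑ j : Fin n → Fin (m + 1) with maxEntry j < k, ∏ i, b (j i) = (∑ ν ∈ range k, b ν) ^ n := by
  have hrange : ∑ ν ∈ range k, b ν = ∑ ν : Fin (m + 1) with ν.val < k, b ν.val := by
    rw [Finset.sum_filter, Fin.sum_univ_eq_sum_range (fun ν => if ν < k then b ν else 0),
      ← Finset.sum_filter]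
    congr 1
    grind
  rw [hrange, Finset.sum_pow']
  congr 1
  ext j
  simp [maxEntry_lt_iff hk]

lemma sum_prod_mul_maxEntry {R : Type*} [CommRing R] (b : ℕ → R)
    (hb : ∑ ν ∈ range (m + 1), b ν = 1) :
    ∑ j : Fin n → Fin (m + 1), (∏ i, b (j i)) * maxEntry j =
      ∑ k ∈ Finset.Icc 1 m, (1 - (∑ ν ∈ range k, b ν) ^ n) := by
  have htotal : ∑ j : Fin n → Fin (m + 1), ∏ i, b (j i) = 1 := by
    rw [← one_pow (M := R) n, ← hb, ← sum_filter_maxEntry_lt_prod b m.succ_pos le_rfl,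
      Finset.filter_true_of_mem fun j _ => Nat.lt_succ_of_le (maxEntry_le j)]
  have htail : ∀ k ∈ Finset.Icc 1 m,
      ∑ j : Fin n → Fin (m + 1) with k ≤ maxEntry j, ∏ i, b (j i) =
        1 - (∑ ν ∈ range k, b ν) ^ n := by
    intro k hk
    obtain ⟨hk1, hkm⟩ := Finset.mem_Icc.mp hk
    rw [eq_sub_iff_add_eq, ← sum_filter_maxEntry_lt_prod b hk1 (hkm.trans m.le_succ), ← htotal,
      ← Finset.sum_filter_add_sum_filter_not univ (fun j : Fin n → Fin (m + 1) => k ≤ maxEntry j)]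
    simp only [not_le]
  have hlayer : ∀ j : Fin n → Fin (m + 1), (∏ i, b (j i)) * maxEntry j =
      ∑ k ∈ Finset.Icc 1 m, if k ≤ maxEntry j then ∏ i, b (j i) else 0 := by
    intro j
    have hfilter : {k ∈ Finset.Icc 1 m | k ≤ maxEntry j} = Finset.Icc 1 (maxEntry j) := by
      have := maxEntry_le j
      grind
    rw [← Finset.sum_filter, hfilter, Finset.sum_const, Nat.card_Icc, Nat.add_sub_cancel,
      nsmul_eq_mul, mul_comm]
  rw [Finset.sum_congr rfl fun j _ => hlayer j, Finset.sum_comm]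
  exact Finset.sum_congr rfl fun k hk => by rw [← Finset.sum_filter, htail k hk]

end MaxEntry

lemma expMaxHyper_zero (n m : ℕ) : expMaxHyper n m 0 = 0 := by
  refine Finset.sum_eq_zero fun j hj => ?_
  have hj0 : ∀ i, (j i : ℕ) = 0 := by simpa using hj
  simp [maxEntry, hj0]

-- A binomially distributed number of cards makes the `n` counts independent and binomial.
lemma sum_expMaxHyper_mul_eval_bernsteinPolynomial (n m : ℕ) (p : ℝ) :
    ∑ t ∈ range (n * m + 1), expMaxHyper n m t * (bernsteinPolynomial ℝ (n * m) t).eval p =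
      ∑ j : Fin n → Fin (m + 1), (∏ i, (bernsteinPolynomial ℝ m (j i)).eval p) * maxEntry j := by
  have hle : ∀ (j : Fin n → Fin (m + 1)) (i : Fin n), (j i : ℕ) ≤ m :=
    fun j i => Nat.lt_succ_iff.mp (j i).2
  have hsum : ∀ j : Fin n → Fin (m + 1), ∑ i, (j i : ℕ) ≤ n * m := fun j => by
    simpa using Finset.sum_le_card_nsmul univ (fun i => (j i : ℕ)) m fun i _ => hle j i
  rw [← Finset.sum_fiberwise_of_maps_to (t := range (n * m + 1))
    (g := fun j : Fin n → Fin (m + 1) => ∑ i, (j i : ℕ))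
    fun j _ => Finset.mem_range_succ_iff.mpr (hsum j)]
  refine Finset.sum_congr rfl fun t ht => ?_
  rw [expMaxHyper, Finset.sum_mul]
  refine Finset.sum_congr rfl fun j hj => ?_
  obtain rfl : ∑ i, (j i : ℕ) = t := (Finset.mem_filter.mp hj).2
  have hchoose : ((n * m).choose (∑ i, (j i : ℕ)) : ℝ) ≠ 0 :=
    mod_cast (Nat.choose_pos (hsum j)).ne'
  have hprod := congr_arg (eval p)
    (choose_mul_prod_bernsteinPolynomial ℝ univ (N := fun _ => m) fun i _ => hle j i)
  simp only [eval_mul, eval_prod, eval_natCast, Finset.sum_const, Finset.card_univ,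
    Fintype.card_fin, smul_eq_mul] at hprod
  field_simp
  linear_combination -(maxEntry j : ℝ) * hprod

lemma sum_eval_bernsteinPolynomial (R : Type*) [CommRing R] (n : ℕ) (p : R) :
    ∑ ν ∈ range (n + 1), (bernsteinPolynomial R n ν).eval p = 1 := by
  rw [← eval_finsetSum, bernsteinPolynomial.sum, eval_one]

lemma sum_Icc_expMaxHyper_mul_eval_bernsteinPolynomial (n m : ℕ) (p : ℝ) :
    ∑ t ∈ Finset.Icc 1 (n * m), expMaxHyper n m t * (bernsteinPolynomial ℝ (n * m) t).eval p =
      ∑ k ∈ Finset.Icc 1 m,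
        (1 - (∑ ν ∈ range k, (bernsteinPolynomial ℝ m ν).eval p) ^ n) := by
  rw [← sum_prod_mul_maxEntry _ (sum_eval_bernsteinPolynomial ℝ m p),
    ← sum_expMaxHyper_mul_eval_bernsteinPolynomial, Finset.range_eq_Ico,
    Finset.sum_eq_sum_Ico_succ_bot (Nat.succ_pos _), expMaxHyper_zero, zero_mul, zero_add]
  rfl

lemma S_eq_sum_integral (n m : ℕ) :
    S n m = ∑ k ∈ Finset.Icc 1 m, ∫ p in (0 : ℝ)..1,
      (1 - (∑ ν ∈ range k, (bernsteinPolynomial ℝ m ν).eval p) ^ n) / p := by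
  have hbern : ∀ t ∈ Finset.Icc 1 (n * m), IntervalIntegrable
      (fun p => expMaxHyper n m t * ((bernsteinPolynomial ℝ (n * m) t).eval p / p))
      MeasureTheory.volume 0 1 := fun t ht =>
    (intervalIntegrable_eval_div_self (by
      rw [bernsteinPolynomial.eval_at_0, if_neg (by grind)]) 0 1).const_mul _
  have htail : ∀ k ∈ Finset.Icc 1 m, IntervalIntegrable
      (fun p => (1 - (∑ ν ∈ range k, (bernsteinPolynomial ℝ m ν).eval p) ^ n) / p)
      MeasureTheory.volume 0 1 := fun k hk => by
    have hk0 : 0 < k := by grind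
    simpa [eval_finsetSum] using intervalIntegrable_eval_div_self
      (P := 1 - (∑ ν ∈ range k, bernsteinPolynomial ℝ m ν) ^ n)
      (by simp [eval_finsetSum, bernsteinPolynomial.eval_at_0, hk0]) 0 1
  rw [← integral_finsetSum htail]
  simp only [← Finset.sum_div, ← sum_Icc_expMaxHyper_mul_eval_bernsteinPolynomial]
  simp only [Finset.sum_div, mul_div_assoc]
  rw [integral_finsetSum hbern, S]
  refine Finset.sum_congr rfl fun t ht => ?_
  obtain ⟨ht1, htN⟩ := Finset.mem_Icc.mp ht
  rw [integral_const_mul, integral_eval_bernsteinPolynomial_div_self (by omega) htN, mul_one_div]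

lemma harmonicNum_eq_sum_range (n : ℕ) : harmonicNum n = ∑ i ∈ range n, 1 / ((i : ℝ) + 1) := by
  rw [harmonicNum, Finset.range_eq_Ico, ← Finset.Ico_add_one_right_eq_Icc,
    ← Finset.sum_Ico_add' _ 0 n 1]
  simp

lemma integral_geom_sum_one_sub_mul_deriv {T T' : ℝ → ℝ} {a b : ℝ}
    (hT : ∀ p ∈ Set.uIcc a b, HasDerivAt T (T' p) p) (hT' : ContinuousOn T' (Set.uIcc a b))
    (ha : T a = 0) (hb : T b = 1) (n : ℕ) :
    ∫ p in a..b, (∑ i ∈ range n, (1 - T p) ^ i) * T' p = harmonicNum n := by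
  have hsubst := integral_comp_mul_deriv (g := fun u => ∑ i ∈ range n, (1 - u) ^ i) hT hT'
    (by fun_prop)
  simp only [Function.comp_def, ha, hb] at hsubst
  rw [hsubst, integral_finsetSum fun i _ => Continuous.intervalIntegrable (by fun_prop) _ _,
    harmonicNum_eq_sum_range]
  refine Finset.sum_congr rfl fun i _ => ?_
  rw [integral_comp_sub_left (fun u => u ^ i) 1]
  simp

lemma integral_exp_neg_mul_rpow_le {a b : ℝ} (ha : 0 < a) (hb : 0 < b) :
    ∫ p in (0 : ℝ)..1, Real.exp (-b * p ^ a) ≤ b ^ (-1 / a) * Real.Gamma (1 / a + 1) := by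
  have hint : MeasureTheory.IntegrableOn (fun p : ℝ => Real.exp (-b * p ^ a)) (Set.Ioi 0) := by
    simpa using integrableOn_rpow_mul_exp_neg_mul_rpow neg_one_lt_zero ha hb
  rw [← integral_exp_neg_mul_rpow ha hb, integral_of_le zero_le_one]
  exact MeasureTheory.setIntegral_mono_set hint (.of_forall fun _ => (Real.exp_pos _).le)
    Set.Ioc_subset_Ioi_self.eventuallyLE

lemma one_sub_pow_le_exp_neg_mul {x : ℝ} (hx : x ≤ 1) (n : ℕ) :
    (1 - x) ^ n ≤ Real.exp (-(n * x)) := by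
  rw [← mul_neg, Real.exp_nat_mul]
  exact pow_le_pow_left₀ (sub_nonneg.mpr hx) (Real.one_sub_le_exp_neg x) n

lemma isBigO_rpow_rpow_atTop_of_le {a b : ℝ} (h : a ≤ b) :
    (fun x : ℝ => x ^ a) =O[atTop] fun x => x ^ b := by
  refine IsBigO.of_norm_eventuallyLE ?_
  filter_upwards [eventually_ge_atTop 1] with x hx
  rw [Real.norm_of_nonneg (by positivity)]
  exact Real.rpow_le_rpow_of_exponent_le hx h

section PowMul

variable {Q Q' : ℝ → ℝ} {k : ℕ}

lemma isBigO_integral_mul_one_sub_pow_mul_pow (hk : k ≠ 0) {g : ℝ → ℝ}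
    (hg : ContinuousOn g (Set.Icc 0 1)) (hQ : ContinuousOn Q (Set.Icc 0 1))
    (hpos : ∀ p ∈ Set.Icc (0 : ℝ) 1, 0 < Q p) (hle : ∀ p ∈ Set.Icc (0 : ℝ) 1, p ^ k * Q p ≤ 1) :
    (fun n : ℕ => ∫ p in (0 : ℝ)..1, g p * (1 - p ^ k * Q p) ^ n) =O[atTop]
      fun n : ℕ => (n : ℝ) ^ (-(1 : ℝ) / k) := by
  obtain ⟨M, hM⟩ := isCompact_Icc.exists_bound_of_continuousOn hg
  obtain ⟨c, hc, hcQ⟩ := isCompact_Icc.exists_forall_le' hQ hpos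
  have hM0 : 0 ≤ M := (norm_nonneg _).trans (hM 0 (by simp))
  have hpointwise : ∀ (n : ℕ), ∀ p ∈ Set.Icc (0 : ℝ) 1,
      ‖g p * (1 - p ^ k * Q p) ^ n‖ ≤ M * Real.exp (-(n * c) * p ^ (k : ℝ)) := by
    intro n p hp
    rw [norm_mul, Real.norm_of_nonneg (pow_nonneg (sub_nonneg.mpr (hle p hp)) n)]
    refine mul_le_mul (hM p hp) ((one_sub_pow_le_exp_neg_mul (hle p hp) n).trans ?_)
      (pow_nonneg (sub_nonneg.mpr (hle p hp)) n) hM0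
    have hcp : p ^ k * c ≤ p ^ k * Q p := mul_le_mul_of_nonneg_left (hcQ p hp) (pow_nonneg hp.1 k)
    rw [Real.exp_le_exp, Real.rpow_natCast, neg_mul, neg_le_neg_iff, mul_assoc, mul_comm c]
    gcongr
  refine IsBigO.of_bound (M * (c ^ (-(1 : ℝ) / k) * Real.Gamma (1 / k + 1))) ?_
  filter_upwards [eventually_gt_atTop 0] with n hn
  have hk' : (0 : ℝ) < k := by positivity
  have hn' : (0 : ℝ) < n := mod_cast hn
  calc ‖∫ p in (0 : ℝ)..1, g p * (1 - p ^ k * Q p) ^ n‖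
      ≤ ∫ p in (0 : ℝ)..1, M * Real.exp (-(n * c) * p ^ (k : ℝ)) :=
        norm_integral_le_of_norm_le zero_le_one
          (.of_forall fun p hp => hpointwise n p (Set.Ioc_subset_Icc_self hp))
          (Continuous.intervalIntegrable (by fun_prop (disch := positivity)) _ _)
    _ ≤ M * ((n * c) ^ (-(1 : ℝ) / k) * Real.Gamma (1 / k + 1)) := by
        rw [integral_const_mul]
        gcongr
        exact integral_exp_neg_mul_rpow_le hk' (by positivity)
    _ = M * (c ^ (-(1 : ℝ) / k) * Real.Gamma (1 / k + 1)) * ‖(n : ℝ) ^ (-(1 : ℝ) / k)‖ := by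
        rw [Real.mul_rpow hn'.le hc.le, Real.norm_of_nonneg (by positivity)]
        ring

-- With `T p = p ^ k * Q p`, this integrates `k / p = T' p / T p - Q' p / Q p` against
-- `1 - (1 - T p) ^ n = T p * ∑ i < n, (1 - T p) ^ i`.
lemma mul_integral_one_sub_pow_div_self (hk : k ≠ 0)
    (hQ : ∀ p ∈ Set.Icc (0 : ℝ) 1, HasDerivAt Q (Q' p) p) (hQ' : ContinuousOn Q' (Set.Icc 0 1))
    (hne : ∀ p ∈ Set.Icc (0 : ℝ) 1, Q p ≠ 0) (hQ1 : Q 1 = 1) (n : ℕ) :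
    k * ∫ p in (0 : ℝ)..1, (1 - (1 - p ^ k * Q p) ^ n) / p =
      harmonicNum n + Real.log (Q 0) +
        ∫ p in (0 : ℝ)..1, Q' p / Q p * (1 - p ^ k * Q p) ^ n := by
  rw [← Set.uIcc_of_le zero_le_one] at hQ hQ' hne
  have hQc : ContinuousOn Q (Set.uIcc 0 1) := fun p hp => (hQ p hp).continuousAt.continuousWithinAt
  have hlogDeriv : ContinuousOn (fun p => Q' p / Q p) (Set.uIcc 0 1) := hQ'.div hQc hne
  have hlog : ∫ p in (0 : ℝ)..1, Q' p / Q p = -Real.log (Q 0) := by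
    rw [integral_eq_sub_of_hasDerivAt (fun p hp => (hQ p hp).log (hne p hp))
      hlogDeriv.intervalIntegrable, hQ1, Real.log_one, zero_sub]
  have hharm := integral_geom_sum_one_sub_mul_deriv (T := fun p => p ^ k * Q p)
    (fun p hp => (hasDerivAt_pow k p).mul (hQ p hp)) (by fun_prop) (by simp [hk]) (by simp [hQ1]) n
  rw [← neg_neg (Real.log _), ← hlog, ← hharm, ← sub_eq_add_neg,
    ← integral_sub (ContinuousOn.intervalIntegrable (by fun_prop)) hlogDeriv.intervalIntegrable,
    ← integral_add (ContinuousOn.intervalIntegrable (by fun_prop))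
      (ContinuousOn.intervalIntegrable (by fun_prop)), ← integral_const_mul]
  refine integral_congr_Ioo_of_le zero_le_one fun p hp => ?_
  have hp0 : p ≠ 0 := hp.1.ne'
  have hQp : Q p ≠ 0 := hne p (Set.Icc_subset_uIcc (Set.Ioo_subset_Icc_self hp))
  have hgeom : (1 - p ^ k * Q p) ^ n =
      1 - (∑ i ∈ range n, (1 - p ^ k * Q p) ^ i) * (p ^ k * Q p) := by
    linear_combination geom_sum_mul_neg (1 - p ^ k * Q p) n
  have hpow : p ^ k = p * p ^ (k - 1) := (mul_pow_sub_one hk p).symm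
  simp only [hgeom]
  field_simp
  rw [hpow]
  ring

lemma isBigO_integral_one_sub_pow_div_self_sub (hk : k ≠ 0)
    (hQ : ∀ p ∈ Set.Icc (0 : ℝ) 1, HasDerivAt Q (Q' p) p) (hQ' : ContinuousOn Q' (Set.Icc 0 1))
    (hpos : ∀ p ∈ Set.Icc (0 : ℝ) 1, 0 < Q p) (hQ1 : Q 1 = 1)
    (hle : ∀ p ∈ Set.Icc (0 : ℝ) 1, p ^ k * Q p ≤ 1) :
    (fun n : ℕ => (∫ p in (0 : ℝ)..1, (1 - (1 - p ^ k * Q p) ^ n) / p) -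
        1 / k * (harmonicNum n + Real.log (Q 0))) =O[atTop]
      fun n : ℕ => (n : ℝ) ^ (-(1 : ℝ) / k) := by
  have hne : ∀ p ∈ Set.Icc (0 : ℝ) 1, Q p ≠ 0 := fun p hp => (hpos p hp).ne'
  have hQc : ContinuousOn Q (Set.Icc 0 1) := fun p hp => (hQ p hp).continuousAt.continuousWithinAt
  refine ((isBigO_integral_mul_one_sub_pow_mul_pow hk (hQ'.div hQc hne) hQc hpos
    hle).const_mul_left (1 / k : ℝ)).congr_left fun n => ?_
  have hk' : (k : ℝ) ≠ 0 := mod_cast hk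
  have hmain := mul_integral_one_sub_pow_div_self hk hQ hQ' hne hQ1 n
  field_simp
  linear_combination -hmain

end PowMul

/-- The polynomial whose product with `X ^ k` is the probability, as a polynomial in `p`, that a
binomial variable with parameters `m` and `p` is at least `k`. -/
noncomputable def binomialTailQuotient (R : Type*) [CommRing R] (m k : ℕ) : R[X] :=
  ∑ ν ∈ Finset.Ico k (m + 1), (m.choose ν : R[X]) * X ^ (ν - k) * (1 - X) ^ (m - ν)

section BinomialTailQuotient

variable {m k : ℕ}

lemma X_pow_mul_binomialTailQuotient (R : Type*) [CommRing R] (m k : ℕ) :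
    X ^ k * binomialTailQuotient R m k =
      ∑ ν ∈ Finset.Ico k (m + 1), bernsteinPolynomial R m ν := by
  rw [binomialTailQuotient, Finset.mul_sum]
  refine Finset.sum_congr rfl fun ν hν => ?_
  rw [bernsteinPolynomial, ← pow_mul_pow_sub X (Finset.mem_Ico.mp hν).1]
  ring

lemma one_sub_pow_mul_eval_binomialTailQuotient {R : Type*} [CommRing R] (hk : k ≤ m + 1) (p : R) :
    1 - p ^ k * (binomialTailQuotient R m k).eval p =
      ∑ ν ∈ range k, (bernsteinPolynomial R m ν).eval p := by
  have htail := congr_arg (eval p) (X_pow_mul_binomialTailQuotient R m k)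
  rw [eval_mul, eval_pow, eval_X, eval_finsetSum] at htail
  rw [htail, sub_eq_iff_eq_add, Finset.sum_range_add_sum_Ico _ hk, sum_eval_bernsteinPolynomial]

lemma eval_zero_binomialTailQuotient {R : Type*} [CommRing R] (hk : k ≤ m) :
    (binomialTailQuotient R m k).eval 0 = m.choose k := by
  rw [binomialTailQuotient, eval_finsetSum,
    Finset.sum_eq_single_of_mem k (by simpa) fun ν hν hne => ?_]
  · simp
  · have : ν - k ≠ 0 := by grind
    simp [this]

lemma eval_one_binomialTailQuotient {R : Type*} [CommRing R] (hk : k ≤ m) :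
    (binomialTailQuotient R m k).eval 1 = 1 := by
  have heval := congr_arg (eval 1) (X_pow_mul_binomialTailQuotient R m k)
  simpa [eval_finsetSum, bernsteinPolynomial.eval_at_1, Nat.lt_succ_of_le le_rfl, hk] using heval

lemma eval_binomialTailQuotient_pos (hk : k ≤ m) {p : ℝ} (hp : p ∈ Set.Icc (0 : ℝ) 1) :
    0 < (binomialTailQuotient ℝ m k).eval p := by
  rcases hp.2.eq_or_lt with rfl | hp1
  · simp [eval_one_binomialTailQuotient hk]
  have hp0 : 0 ≤ p := hp.1
  have : 0 < 1 - p := sub_pos.mpr hp1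
  simp only [binomialTailQuotient, eval_finsetSum, eval_mul, eval_natCast, eval_pow, eval_X,
    eval_sub, eval_one]
  refine Finset.sum_pos' (fun ν _ => by positivity) ⟨k, by simpa, ?_⟩
  have := Nat.choose_pos hk
  rw [Nat.sub_self, pow_zero]
  positivity

lemma pow_mul_eval_binomialTailQuotient_le_one (hk : k ≤ m + 1) {p : ℝ}
    (hp : p ∈ Set.Icc (0 : ℝ) 1) : p ^ k * (binomialTailQuotient ℝ m k).eval p ≤ 1 := by
  rw [← sub_nonneg, one_sub_pow_mul_eval_binomialTailQuotient hk]
  have hp0 : 0 ≤ p := hp.1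
  have hq0 : 0 ≤ 1 - p := sub_nonneg.mpr hp.2
  refine Finset.sum_nonneg fun ν _ => ?_
  simp only [bernsteinPolynomial, eval_mul, eval_natCast, eval_pow, eval_X, eval_sub, eval_one]
  positivity

end BinomialTailQuotient

lemma isBigO_S_sub (m : ℕ) :
    (fun n : ℕ => S n m - ∑ k ∈ Finset.Icc 1 m,
        1 / (k : ℝ) * (harmonicNum n + Real.log (m.choose k))) =O[atTop]
      fun n : ℕ => (n : ℝ) ^ (-(1 : ℝ) / m) := by
  have hterm : ∀ k ∈ Finset.Icc 1 m, (fun n : ℕ =>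
      (∫ p in (0 : ℝ)..1, (1 - (∑ ν ∈ range k, (bernsteinPolynomial ℝ m ν).eval p) ^ n) / p) -
        1 / (k : ℝ) * (harmonicNum n + Real.log (m.choose k))) =O[atTop]
      fun n : ℕ => (n : ℝ) ^ (-(1 : ℝ) / m) := by
    intro k hk
    obtain ⟨hk1, hkm⟩ := Finset.mem_Icc.mp hk
    have hexp : -(1 : ℝ) / k ≤ -(1 : ℝ) / m := by
      rw [neg_div, neg_div]
      gcongr
    have hasymp := isBigO_integral_one_sub_pow_div_self_sub (Nat.one_le_iff_ne_zero.mp hk1)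
      (fun p _ => (binomialTailQuotient ℝ m k).hasDerivAt p) (by fun_prop)
      (fun p => eval_binomialTailQuotient_pos hkm) (eval_one_binomialTailQuotient hkm)
      (fun p => pow_mul_eval_binomialTailQuotient_le_one (hkm.trans m.le_succ))
    simp only [one_sub_pow_mul_eval_binomialTailQuotient (hkm.trans m.le_succ),
      eval_zero_binomialTailQuotient hkm] at hasymp
    exact hasymp.trans (isBigO_rpow_rpow_atTop_of_le hexp).natCast_atTop
  refine (IsBigO.fun_sum hterm).congr_left fun n => ?_
  rw [Finset.sum_sub_distrib, S_eq_sum_integral]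

theorem stmt2 (m : ℕ) (hm : 1 ≤ m) :
    ∃ C > 0, ∀ n : ℕ, 1 ≤ n →
      |S n m - harmonicNum m * harmonicNum n -
          ∑ j ∈ Finset.Icc 1 (m - 1), (1 / (j : ℝ)) * Real.log (Nat.choose m j)| ≤
        C * (n : ℝ) ^ (-(1 : ℝ) / m) := by
  have hsum : ∀ n : ℕ,
      ∑ k ∈ Finset.Icc 1 m, 1 / (k : ℝ) * (harmonicNum n + Real.log (m.choose k)) =
        harmonicNum m * harmonicNum n +
          ∑ j ∈ Finset.Icc 1 (m - 1), (1 / (j : ℝ)) * Real.log (Nat.choose m j) := by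
    intro n
    obtain ⟨l, rfl⟩ := Nat.exists_eq_add_of_le' hm
    simp only [mul_add, Finset.sum_add_distrib, ← Finset.sum_mul, harmonicNum]
    congr 1
    rw [Finset.sum_Icc_succ_top (Nat.le_add_left 1 l)]
    simp
  obtain ⟨C, hC, hbound⟩ := bound_of_isBigO_nat_atTop (isBigO_S_sub m)
  refine ⟨C, hC, fun n hn => ?_⟩
  have hpos : 0 < (n : ℝ) ^ (-(1 : ℝ) / m) := Real.rpow_pos_of_pos (mod_cast hn) _
  simpa only [hsum, ← sub_sub, Real.norm_eq_abs, abs_of_pos hpos] using hbound hpos.ne'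
end
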